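/- arXiv:2110.05491 — 2 statements merged into one kernel-verified Lean document; each statement's English description precedes it below -/
import Mathlib

section
/- Let N ≥ 1, let A be a commutative ℚ-algebra, and let f : ℕ → A be any function. Then the sum over all permutations g of Fin N of the product f(1)^(N − s(g)) · ∏_{k ∈ cycleType(g)} f(k), where s(g) is the sum of the entries of the cycle type of g, equals N! times the sum over all partitions λ of N of the product over k from 1 to N of f(k)^(m_k(λ)) / (k^(m_k(λ)) · m_k(λ)!), where m_k(λ) denotes the number of parts of λ equal to k. -/
/-!
Group the permutations `g` by the partition `fullCycleType g` of `N` recording all cycle lengths,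
fixed points included. On the fibre over `p` the summand is constant, equal to
`∏ k, f k ^ (p.parts.count k)`, because the fixed points contribute the factor `f 1 ^ (N - s(g))`
(`summand_eq`). The fibre is a conjugacy class, namely the permutations whose cycle type is the
multiset of parts of `p` that are at least `2`, so it has
`N! / ∏ k, (k ^ (p.parts.count k) * (p.parts.count k)!)` elements (`card_fiber_mul`, from
Mathlib's `Equiv.Perm.card_of_cycleType_mul_eq`).
-/

open Equiv Finset

/-- The partition of `N` formed by all cycle lengths of `g`, with a part `1` for each fixed point.
It is `Equiv.Perm.partition`, typed as a partition of `N` rather than of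
`Fintype.card (Fin N)`. -/
def fullCycleType {N : ℕ} (g : Equiv.Perm (Fin N)) : Nat.Partition N where
  parts := g.cycleType + Multiset.replicate (N - g.cycleType.sum) 1
  parts_pos {n hn} := by
    rcases Multiset.mem_add.mp hn with hn | hn
    · exact zero_lt_one.trans (Equiv.Perm.one_lt_of_mem_cycleType hn)
    · exact (Multiset.eq_of_mem_replicate hn).symm ▸ zero_lt_one
  parts_sum := by
    have h : g.cycleType.sum ≤ N := by
      simpa [Equiv.Perm.sum_cycleType] using g.support.card_le_univ
    simp [h]

theorem parts_eq_filter_add_replicate {N : ℕ} (p : Nat.Partition N) :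
    p.parts = p.parts.filter (2 ≤ ·) + Multiset.replicate (p.parts.count 1) 1 := by
  ext k
  rw [Multiset.count_add, Multiset.count_filter, Multiset.count_replicate]
  rcases Nat.lt_or_ge k 2 with hk | hk
  · interval_cases k
    · simpa using fun h => (p.parts_pos h).ne' rfl
    · simp
  · have : (1 : ℕ) ≠ k := by omega
    simp [hk, this]

theorem sum_filter_add_count {N : ℕ} (p : Nat.Partition N) :
    (p.parts.filter (2 ≤ ·)).sum + p.parts.count 1 = N := by
  have h := congrArg Multiset.sum (parts_eq_filter_add_replicate p)
  rw [p.parts_sum] at h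
  simpa using h.symm

theorem filter_fullCycleType {N : ℕ} (g : Equiv.Perm (Fin N)) :
    (fullCycleType g).parts.filter (2 ≤ ·) = g.cycleType := by
  rw [fullCycleType, Multiset.filter_add,
    Multiset.filter_eq_self.2 fun _ => Equiv.Perm.two_le_of_mem_cycleType,
    Multiset.filter_eq_nil.2 fun a h => ?_, add_zero]
  rw [Multiset.eq_of_mem_replicate h]
  decide

theorem fullCycleType_eq_iff {N : ℕ} (g : Equiv.Perm (Fin N)) (p : Nat.Partition N) :
    fullCycleType g = p ↔ g.cycleType = p.parts.filter (2 ≤ ·) := by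
  constructor
  · rintro rfl
    exact (filter_fullCycleType g).symm
  · intro h
    have hs := sum_filter_add_count p
    rw [← h] at hs
    apply Nat.Partition.ext
    rw [parts_eq_filter_add_replicate p, ← h, Nat.eq_sub_of_add_eq' hs]
    rfl

theorem parts_toFinset_subset {N : ℕ} (p : Nat.Partition N) :
    p.parts.toFinset ⊆ Finset.Icc 1 N := by
  intro k hk
  rw [Multiset.mem_toFinset] at hk
  exact Finset.mem_Icc.2 ⟨p.parts_pos hk, p.le_of_mem_parts hk⟩

theorem prod_map_parts {M : Type*} [CommMonoid M] {N : ℕ} (p : Nat.Partition N) (f : ℕ → M) :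
    (p.parts.map f).prod = ∏ k ∈ Finset.Icc 1 N, f k ^ p.parts.count k := by
  rw [Finset.prod_multiset_map_count]
  refine Finset.prod_subset (parts_toFinset_subset p) fun k _ hk => ?_
  rw [Multiset.mem_toFinset] at hk
  rw [Multiset.count_eq_zero_of_notMem hk, pow_zero]

theorem summand_eq {A : Type*} [CommRing A] {N : ℕ} (f : ℕ → A) (g : Equiv.Perm (Fin N)) :
    f 1 ^ (N - g.cycleType.sum) * (g.cycleType.map f).prod =
      ∏ k ∈ Finset.Icc 1 N, f k ^ (fullCycleType g).parts.count k := by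
  rw [← prod_map_parts]
  simp [fullCycleType, mul_comm]

/-- Parts equal to `1` enter the centralizer order of a permutation through the factorial of the
number of fixed points, other parts through the cycle type. -/
theorem prod_factorial_count {N : ℕ} (hN : 1 ≤ N) (p : Nat.Partition N) :
    ∏ k ∈ Finset.Icc 1 N, (p.parts.count k).factorial =
      (p.parts.count 1).factorial *
        ∏ k ∈ (p.parts.filter (2 ≤ ·)).toFinset,
          ((p.parts.filter (2 ≤ ·)).count k).factorial := by
  rw [← Finset.mul_prod_erase _ _ (Finset.mem_Icc.2 ⟨le_rfl, hN⟩)]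
  congr 1
  symm
  have hsub : (p.parts.filter (2 ≤ ·)).toFinset ⊆ (Finset.Icc 1 N).erase 1 := by
    intro k hk
    rw [Multiset.mem_toFinset, Multiset.mem_filter] at hk
    have := p.le_of_mem_parts hk.1
    simp only [Finset.mem_erase, Finset.mem_Icc]
    omega
  rw [Finset.prod_subset hsub fun k _ hk => by
    rw [Multiset.mem_toFinset] at hk
    rw [Multiset.count_eq_zero_of_notMem hk, Nat.factorial_zero]]
  refine Finset.prod_congr rfl fun k hk => ?_
  simp only [Finset.mem_erase, Finset.mem_Icc] at hk
  rw [Multiset.count_filter_of_pos (by omega)]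

/-- Orbit–stabilizer for the conjugacy class of permutations with full cycle type `p`. -/
theorem card_fiber_mul {N : ℕ} (hN : 1 ≤ N) (p : Nat.Partition N) :
    #{g : Equiv.Perm (Fin N) | fullCycleType g = p} *
      ∏ k ∈ Finset.Icc 1 N, (k ^ p.parts.count k * (p.parts.count k).factorial) =
        N.factorial := by
  have h := Equiv.Perm.card_of_cycleType_mul_eq (Fin N) (p.parts.filter (2 ≤ ·))
  have hs := sum_filter_add_count p
  rw [Fintype.card_fin, if_pos ⟨by omega, fun a ha => (Multiset.mem_filter.1 ha).2⟩,
    ← Nat.eq_sub_of_add_eq' hs] at h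
  have hprod : (p.parts.filter (2 ≤ ·)).prod = ∏ k ∈ Finset.Icc 1 N, k ^ p.parts.count k := by
    have h1 := congrArg Multiset.prod (parts_eq_filter_add_replicate p)
    rw [Multiset.prod_add, Multiset.prod_replicate, one_pow, mul_one] at h1
    rw [← h1]
    simpa using prod_map_parts p id
  simp only [fullCycleType_eq_iff]
  rw [Finset.prod_mul_distrib, prod_factorial_count hN, ← hprod, ← h]
  ring

/-- The symmetrized cycle sum over `Perm (Fin N)` equals `N!` times a sum over partitions of `N`
weighted by inverse centralizer orders. -/
theorem stmt1 {A : Type*} [CommRing A] [Algebra ℚ A] (N : ℕ) (hN : 1 ≤ N) (f : ℕ → A) :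
    ∑ g : Equiv.Perm (Fin N),
        f 1 ^ (N - g.cycleType.sum) * (g.cycleType.map f).prod =
      (N.factorial : A) *
        ∑ p : Nat.Partition N,
          ∏ k ∈ Finset.Icc 1 N,
            algebraMap ℚ A
                (((k : ℚ) ^ (p.parts.count k) * ((p.parts.count k).factorial : ℚ))⁻¹) *
              f k ^ (p.parts.count k) := by
  rw [← Finset.sum_fiberwise Finset.univ (fullCycleType (N := N)), Finset.mul_sum]
  refine Finset.sum_congr rfl fun p _ => ?_
  have hterm : ∀ g ∈ ({g : Equiv.Perm (Fin N) | fullCycleType g = p} : Finset _),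
      f 1 ^ (N - g.cycleType.sum) * (g.cycleType.map f).prod =
        ∏ k ∈ Finset.Icc 1 N, f k ^ p.parts.count k := by
    intro g hg
    rw [summand_eq, (Finset.mem_filter.1 hg).2]
  rw [Finset.sum_congr rfl hterm, Finset.sum_const, nsmul_eq_mul, Finset.prod_mul_distrib,
    ← mul_assoc, ← map_prod, Finset.prod_inv_distrib]
  congr 1
  -- What remains is the image in `A` of a rational identity for the size of the fibre.
  have hcard := congrArg (Nat.cast : ℕ → ℚ) (card_fiber_mul hN p)
  push_cast at hcard
  have hne : ∏ k ∈ Finset.Icc 1 N,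
      ((k : ℚ) ^ p.parts.count k * ((p.parts.count k).factorial : ℚ)) ≠ 0 := by
    refine Finset.prod_ne_zero_iff.2 fun k hk => ?_
    have : 0 < k := (Finset.mem_Icc.1 hk).1
    positivity
  rw [← map_natCast (algebraMap ℚ A), ← map_natCast (algebraMap ℚ A) N.factorial, ← map_mul,
    ← hcard, mul_inv_cancel_right₀ hne]
end

section
/- There exist positive real constants c₀ and c₁ with c₀ < c₁ such that for every ε > 0 there is an N₀ with the following property: for every N ≥ N₀ and every complete irredundant family (U_i)_{i ∈ I} of irreducible complex representations of the symmetric group Perm(Fin N), the sum of (dim U_i)² over those indices i for which c₀ < −(2/√N) · log(dim U_i / √(N!)) < c₁ is at least (1 − ε) · N!. -/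
/-!
Write `d` for the dimension of an irreducible representation of `S_N`. Two ranges of `d` carry
negligible Plancherel mass.

*Small dimensions.* There are at most `p(N) ≤ e^{(1 + ζ(2)) √N}` irreducibles (`card_irreps_le`), so
those with `d² ≤ e^{-(2 + ζ(2)) √N} N!` have total mass at most `e^{-√N}`.

*Large dimensions.* The Jucys–Murphy elements `X_j = ∑_{i < j} (i j)` commute and, in a unitary
representation, are symmetric. Following Okounkov and Vershik, the relation `s X_{j+1} = X_j s + 1`
for the adjacent transposition `s = (j j+1)` gives the integrality of their eigenvalues (`eigen_int`)
and the irreducibility under `S_m` of the joint eigenspaces of the `X_j`, `j ≥ m` (`branching`).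
Hence an irreducible representation has an orthonormal basis of joint eigenvectors with pairwise
distinct integral content vectors, and these are rearrangements of one another (`exists_GZ`).

Restrict to `S_n` with `N - n = k ≈ √N / 120`, and consider the last `k` contents of a basis vector,
its tail.

* The basis vectors with tail in a finite set `T` span an `S_n`-representation `W` whose endomorphism
  algebra has dimension at most `#T k!`: by irreducibility of the joint eigenspaces an
  endomorphism is determined by the image of one basis vector for each tail, and that image is a combination of the
  at most `k!` basis vectors with the same first `n` contents. As `(dim W)² ≤ n! dim End W` for any representation,
  there are at most `√(n! k! #T)` such vectors (`card_tail_sq_le`).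
* Take for `T` the tails with sum of squares at most `2 k N`. The operator `∑_{j ≥ n} (X_j² - j)` is
  a sum of at most `k N²` distinct 3-cycles, so by column orthogonality of characters
  (`plancherel_char`) its second moment over the Plancherel measure is at most `k N²`. By Chebyshev's
  inequality the basis vectors with tail outside `T` have proportion at most `1 / k` on average, and
  the mass of the representations with `d² > 4 n! k! #T` is at most `2 / k` (`large_mass`).
* Counting lattice points, `#T ≤ (20 √N)^k` (`goodT_card`), and since `n! (N / 2)^k ≤ N!` this gives
  `4 n! k! #T < e^{-√N / 240} N!` (`bound_small`).

So the mass of `{d² ≥ e^{-√N / 240} N!}` also tends to zero, and `c₀ = 1 / 240`, `c₁ = 2 + ζ(2)` work.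
-/

open CategoryTheory
open scoped Classical

namespace KerovPlancherel

open Equiv

/-! ### Jucys–Murphy elements and the degenerate affine Hecke relation -/

section jucysMurphy

variable {N : ℕ} {V : Type} [NormedAddCommGroup V] [InnerProductSpace ℂ V]

/-- The Jucys–Murphy element `X_j = ∑_{i < j} (i j)`, acting through `ρ`. -/
noncomputable def JM {W : Type*} [AddCommGroup W] [Module ℂ W]
    (ρ : Representation ℂ (Perm (Fin N)) W) (j : Fin N) : W →ₗ[ℂ] W :=
  ∑ i ∈ Finset.Iio j, ρ (swap i j)

/-- An irreducible representation by isometries. -/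
structure UIrrep (ρ : Representation ℂ (Perm (Fin N)) V) : Prop where
  inner_map : ∀ g u v, inner ℂ (ρ g u) (ρ g v) = inner ℂ u v
  irred : ∀ W : Submodule ℂ V, (∀ g, ∀ w ∈ W, ρ g w ∈ W) → W = ⊥ ∨ W = ⊤

/-- The permutations of `Fin N` moving only points `< n`: a copy of `S_n` when `n ≤ N`. -/
def Sub (N n : ℕ) : Subgroup (Perm (Fin N)) where
  carrier := {g | ∀ i : Fin N, n ≤ i → g i = i}
  mul_mem' := fun {a b} ha hb i hi => by
    simp only [Set.mem_ofPred_eq] at *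
    rw [Perm.mul_apply, hb i hi, ha i hi]
  one_mem' := fun i _ => rfl
  inv_mem' := fun {a} ha i hi => by
    simp only [Set.mem_ofPred_eq] at *
    rw [Perm.inv_eq_iff_eq, ha i hi]

lemma mem_Sub {n : ℕ} {g : Perm (Fin N)} : g ∈ Sub N n ↔ ∀ i : Fin N, n ≤ i → g i = i := Iff.rfl

lemma swap_mem_Sub {n : ℕ} {a b : Fin N} (ha : a.val < n) (hb : b.val < n) :
    swap a b ∈ Sub N n := by
  intro i hi
  apply swap_apply_of_ne_of_ne <;> rintro rfl <;> omega

lemma Sub_lt {n : ℕ} {g : Perm (Fin N)} (hg : g ∈ Sub N n) {i : Fin N} (hi : i.val < n) :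
    (g i).val < n := by
  by_contra h
  have := hg (g i) (by omega)
  have := g.injective this
  omega

section plain
variable {W : Type*} [AddCommGroup W] [Module ℂ W] (ρ : Representation ℂ (Perm (Fin N)) W)

lemma rho_mul (g h : Perm (Fin N)) : ρ (g * h) = ρ g * ρ h := map_mul ρ g h

lemma JM_comm_Sub {j : Fin N} {g : Perm (Fin N)} (hg : g ∈ Sub N j) :
    ρ g * JM ρ j = JM ρ j * ρ g := by
  unfold JM
  rw [Finset.mul_sum, Finset.sum_mul]
  refine Finset.sum_bij' (fun i _ => g i) (fun i _ => g⁻¹ i) ?_ ?_ ?_ ?_ ?_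
  · intro i hi
    rw [Finset.mem_Iio] at *
    exact Sub_lt hg hi
  · intro i hi
    rw [Finset.mem_Iio] at *
    exact Sub_lt (inv_mem hg) hi
  · intros; simp
  · intros; simp
  · intro i hi
    rw [← map_mul, ← map_mul]
    congr 1
    have h2 : g j = j := hg j le_rfl
    rw [Equiv.mul_swap_eq_swap_mul, h2]

lemma JM_comm_Sub_apply {j : Fin N} {g : Perm (Fin N)} (hg : g ∈ Sub N j) (v : W) :
    ρ g (JM ρ j v) = JM ρ j (ρ g v) := LinearMap.congr_fun (JM_comm_Sub ρ hg) v

lemma JM_comm_of_lt {i j : Fin N} (h : i < j) : JM ρ i * JM ρ j = JM ρ j * JM ρ i := by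
  conv_lhs => rw [JM]
  conv_rhs => rw [JM.eq_1 ρ i]
  rw [Finset.mul_sum, Finset.sum_mul]
  refine Finset.sum_congr rfl fun a ha => ?_
  rw [Finset.mem_Iio] at ha
  exact JM_comm_Sub ρ (swap_mem_Sub (ha.trans h) h)

lemma JM_comm (i j : Fin N) : JM ρ i * JM ρ j = JM ρ j * JM ρ i := by
  rcases lt_trichotomy i j with h | rfl | h
  · exact JM_comm_of_lt ρ h
  · rfl
  · exact (JM_comm_of_lt ρ h).symm

lemma JM_comm_apply (i j : Fin N) (v : W) : JM ρ i (JM ρ j v) = JM ρ j (JM ρ i v) :=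
  LinearMap.congr_fun (JM_comm ρ i j) v

/-- The degenerate affine Hecke relation `s X_{j+1} = X_j s + 1`. -/
lemma hecke {j j' : Fin N} (h : j'.val = j.val + 1) :
    ρ (swap j j') * JM ρ j' = JM ρ j * ρ (swap j j') + 1 := by
  have hI : Finset.Iio j' = insert j (Finset.Iio j) := by
    ext a; simp only [Finset.mem_Iio, Finset.mem_insert, Fin.ext_iff, Fin.lt_def]; omega
  unfold JM
  rw [hI, Finset.sum_insert (by simp), mul_add, Finset.mul_sum, Finset.sum_mul, add_comm]
  congr 1
  · refine Finset.sum_congr rfl fun a ha => ?_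
    rw [Finset.mem_Iio] at ha
    rw [← map_mul, ← map_mul]
    congr 1
    have h1 : a ≠ j := ha.ne
    have h2 : a ≠ j' := by rw [Fin.lt_def] at ha; intro h3; rw [Fin.ext_iff] at h3; omega
    rw [Equiv.mul_swap_eq_swap_mul, swap_apply_right, swap_apply_of_ne_of_ne h1 h2]
  · rw [← map_mul, swap_mul_self, map_one]

lemma hecke_apply {j j' : Fin N} (h : j'.val = j.val + 1) (v : W) :
    ρ (swap j j') (JM ρ j' v) = JM ρ j (ρ (swap j j') v) + v :=
  LinearMap.congr_fun (hecke ρ h) v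

lemma swap_swap_apply (i j : Fin N) (v : W) : ρ (swap i j) (ρ (swap i j) v) = v := by
  rw [← Module.End.mul_apply, ← map_mul, swap_mul_self, map_one]; rfl

lemma hecke_apply' {j j' : Fin N} (h : j'.val = j.val + 1) (v : W) :
    JM ρ j' (ρ (swap j j') v) = ρ (swap j j') (JM ρ j v) + v := by
  have h1 := hecke_apply ρ h (ρ (swap j j') v)
  rw [swap_swap_apply] at h1
  have h2 := congrArg (ρ (swap j j')) h1
  rw [swap_swap_apply, map_add, swap_swap_apply] at h2
  exact h2

lemma JM_comm_swap {j j' l : Fin N} (h : j'.val = j.val + 1) (h1 : l ≠ j) (h2 : l ≠ j') (v : W) :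
    ρ (swap j j') (JM ρ l v) = JM ρ l (ρ (swap j j') v) := by
  rw [Ne, Fin.ext_iff] at h1 h2
  rcases lt_or_gt_of_ne h1 with h3 | h3
  · unfold JM
    rw [LinearMap.sum_apply, LinearMap.sum_apply, map_sum]
    refine Finset.sum_congr rfl fun a ha => ?_
    rw [Finset.mem_Iio, Fin.lt_def] at ha
    rw [← Module.End.mul_apply, ← Module.End.mul_apply, ← map_mul, ← map_mul,
      Equiv.mul_swap_eq_swap_mul, swap_apply_of_ne_of_ne, swap_apply_of_ne_of_ne] <;>
    · rw [Ne, Fin.ext_iff]; omega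
  · exact JM_comm_Sub_apply ρ (swap_mem_Sub (by omega) (by omega)) v

/-- `s v = v / (b - a) + w`, where `w` has the contents of `v` with two neighbours swapped. -/
lemma swap_decomp {j j' : Fin N}
    (h : j'.val = j.val + 1) (a b : ℂ) (hab : a ≠ b) {v : W} (h1 : JM ρ j v = a • v)
    (h2 : JM ρ j' v = b • v) :
    JM ρ j (ρ (swap j j') v - (b - a)⁻¹ • v) = b • (ρ (swap j j') v - (b - a)⁻¹ • v) ∧
    JM ρ j' (ρ (swap j j') v - (b - a)⁻¹ • v) = a • (ρ (swap j j') v - (b - a)⁻¹ • v) := by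
  have h3 := hecke_apply ρ h v
  have h3' := hecke_apply' ρ h v
  rw [h2, map_smul] at h3
  rw [h1, map_smul] at h3'
  have hba : b - a ≠ 0 := sub_ne_zero.mpr hab.symm
  have h4 : JM ρ j (ρ (swap j j') v) = b • ρ (swap j j') v - v := by rw [h3]; abel
  constructor
  · rw [map_sub, map_smul, h1, h4]
    have : v = ((b - a)⁻¹ * (b - a)) • v := by rw [inv_mul_cancel₀ hba, one_smul]
    nth_rw 2 [this]
    module
  · rw [map_sub, map_smul, h2, h3']
    have : v = ((b - a)⁻¹ * (b - a)) • v := by rw [inv_mul_cancel₀ hba, one_smul]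
    nth_rw 2 [this]
    module

end plain

section unitary
variable {ρ : Representation ℂ (Perm (Fin N)) V}

lemma JM_symm (hU : ∀ g u v, inner ℂ (ρ g u) (ρ g v) = inner ℂ u v) (j : Fin N) (u v : V) :
    inner ℂ (JM ρ j u) v = inner ℂ u (JM ρ j v) := by
  unfold JM
  rw [LinearMap.sum_apply, LinearMap.sum_apply, sum_inner, inner_sum]
  refine Finset.sum_congr rfl fun a ha => ?_
  rw [← hU (swap a j), swap_swap_apply]

/-- Consecutive Jucys–Murphy elements never share an eigenvalue on a common eigenvector. -/
lemma no_repeat (hU : ∀ g u v, inner ℂ (ρ g u) (ρ g v) = inner ℂ u v) {j j' : Fin N}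
    (h : j'.val = j.val + 1) (c : ℤ) {v : V} (h1 : JM ρ j v = (c : ℂ) • v)
    (h2 : JM ρ j' v = (c : ℂ) • v) : v = 0 := by
  have h3 := hecke_apply ρ h v
  rw [h2, map_smul] at h3
  set u := ρ (swap j j') v with hu
  -- `v = (c - X_j) u` with `X_j` symmetric, so `v` is orthogonal to the `c`-eigenspace of `X_j`,
  -- to which it belongs
  have h4 : JM ρ j u = (c : ℂ) • u - v := by rw [h3]; abel
  have h5 : inner ℂ v v = (0 : ℂ) := by
    have e1 : v = (c : ℂ) • u - JM ρ j u := by rw [h4]; abel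
    calc inner ℂ v v = inner ℂ ((c : ℂ) • u - JM ρ j u) v := by rw [← e1]
      _ = 0 := by
        rw [inner_sub_left, JM_symm hU, h1, inner_smul_left, inner_smul_right]
        simp
  exact inner_self_eq_zero.mp h5

end unitary

end jucysMurphy

/-! ### Joint eigenvectors and integrality of contents -/

section plain2
variable {N : ℕ} {W : Type*} [AddCommGroup W] [Module ℂ W]
  (ρ : Representation ℂ (Perm (Fin N)) W)

lemma exists_eigen [FiniteDimensional ℂ W] (T : W →ₗ[ℂ] W) (p : Submodule ℂ W) (hp : p ≠ ⊥) (hT : ∀ v ∈ p, T v ∈ p) :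
    ∃ μ : ℂ, ∃ v ∈ p, v ≠ 0 ∧ T v = μ • v := by
  have : Nontrivial p := Submodule.nontrivial_iff_ne_bot.mpr hp
  obtain ⟨μ, hμ⟩ := Module.End.exists_eigenvalue (T.restrict hT)
  obtain ⟨v, hv⟩ := hμ.exists_hasEigenvector
  refine ⟨μ, v, v.2, fun h => hv.2 (Subtype.ext h), ?_⟩
  have := congrArg Subtype.val hv.apply_eq_smul
  simpa using this

/-- Eigenvalues of Jucys–Murphy elements are integers. By induction on `j`: a vector with contents
`(b, μ)` at two consecutive positions either gives one with the contents exchanged, so that `μ`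
occurs at the earlier position, or is an eigenvector of the transposition and `μ = b ± 1`. -/
lemma eigen_int [FiniteDimensional ℂ W] (j : Fin N) (μ : ℂ) (v : W) (hv : v ≠ 0) (h : JM ρ j v = μ • v) :
    ∃ c : ℤ, μ = c := by
  obtain ⟨j, hj⟩ := j
  induction j generalizing μ v with
  | zero =>
    have h0 : JM ρ ⟨0, hj⟩ = 0 := by
      unfold JM
      have : Finset.Iio (⟨0, hj⟩ : Fin N) = ∅ := by
        ext a; simp [Fin.lt_def]
      rw [this, Finset.sum_empty]
    rw [h0, LinearMap.zero_apply] at h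
    exact ⟨0, by simpa using (smul_eq_zero.mp h.symm).resolve_right hv⟩
  | succ j ih =>
    set x : Fin N := ⟨j, by omega⟩
    set y : Fin N := ⟨j + 1, hj⟩
    have hxy : y.val = x.val + 1 := rfl
    obtain ⟨b, v, hvE, hv0, hb⟩ := exists_eigen (JM ρ x) (LinearMap.ker (JM ρ y - μ • 1))
      (by
        intro hbot
        have : v ∈ LinearMap.ker (JM ρ y - μ • 1) := by simp [h]
        rw [hbot] at this
        exact hv (by simpa using this))
      (by
        intro u hu
        simp only [LinearMap.mem_ker, LinearMap.sub_apply, LinearMap.smul_apply,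
          Module.End.one_apply, sub_eq_zero] at hu ⊢
        rw [JM_comm_apply, hu, map_smul])
    simp only [LinearMap.mem_ker, LinearMap.sub_apply, LinearMap.smul_apply,
      Module.End.one_apply, sub_eq_zero] at hvE
    obtain ⟨c, hc⟩ := ih b v hv0 (by omega) hb
    by_cases hbm : b = μ
    · exact ⟨c, hbm ▸ hc⟩
    have hd := swap_decomp ρ hxy b μ hbm hb hvE
    set w := ρ (swap x y) v - (μ - b)⁻¹ • v with hw
    by_cases hw0 : w = 0
    -- here `s v = (μ - b)⁻¹ v` and `s² = 1` force `μ - b = ±1`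
    · have h1 : ρ (swap x y) v = (μ - b)⁻¹ • v := sub_eq_zero.mp hw0
      have h2 := swap_swap_apply ρ x y v
      rw [h1, map_smul, h1, smul_smul] at h2
      have h3 : ((μ - b)⁻¹ * (μ - b)⁻¹) = 1 := by
        have : ((μ - b)⁻¹ * (μ - b)⁻¹ - 1) • v = 0 := by rw [sub_smul, h2, one_smul, sub_self]
        exact sub_eq_zero.mp ((smul_eq_zero.mp this).resolve_right hv0)
      rcases mul_self_eq_one_iff.mp h3 with h4 | h4
      · exact ⟨c + 1, by rw [inv_eq_one] at h4; push_cast; rw [← hc, ← h4]; ring⟩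
      · refine ⟨c - 1, ?_⟩
        have h5 : μ - b = -1 := by rw [← inv_inv (μ - b), h4]; norm_num
        push_cast; rw [← hc, ← sub_add_cancel μ b, h5]; ring
    · exact ih μ w hw0 (by omega) hd.1

/-- A nonzero subspace stable under all Jucys–Murphy elements contains a joint eigenvector, and
all eigenvalues are integers. -/
lemma exists_joint [FiniteDimensional ℂ W] (p : Submodule ℂ W) (hp : p ≠ ⊥) (hT : ∀ j, ∀ v ∈ p, JM ρ j v ∈ p) :
    ∃ c : Fin N → ℤ, ∃ v ∈ p, v ≠ 0 ∧ ∀ j, JM ρ j v = (c j : ℂ) • v := by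
  have key : ∀ s : Finset (Fin N), ∃ c : Fin N → ℤ,
      p ⊓ (⨅ j ∈ s, LinearMap.ker (JM ρ j - (c j : ℂ) • 1)) ≠ ⊥ := by
    intro s
    induction s using Finset.induction_on with
    | empty => exact ⟨0, by simpa using hp⟩
    | insert a s ha ih =>
      obtain ⟨c, hc⟩ := ih
      obtain ⟨μ, v, hv, hv0, hμ⟩ := exists_eigen (JM ρ a) _ hc (by
        intro u hu
        simp only [Submodule.mem_inf, Submodule.mem_iInf, LinearMap.mem_ker, LinearMap.sub_apply,
          LinearMap.smul_apply, Module.End.one_apply, sub_eq_zero] at hu ⊢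
        exact ⟨hT _ _ hu.1, fun j hj => by rw [JM_comm_apply, hu.2 j hj, map_smul]⟩)
      obtain ⟨m, rfl⟩ := eigen_int ρ a μ v hv0 hμ
      refine ⟨Function.update c a m, fun hbot => hv0 ?_⟩
      rw [← Submodule.mem_bot (R := ℂ), ← hbot]
      simp only [Submodule.mem_inf, Submodule.mem_iInf, LinearMap.mem_ker, LinearMap.sub_apply,
          LinearMap.smul_apply, Module.End.one_apply, sub_eq_zero] at hv ⊢
      refine ⟨hv.1, fun j hj => ?_⟩
      rcases Finset.mem_insert.mp hj with rfl | hjs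
      · rw [Function.update_self]; exact hμ
      · rw [Function.update_of_ne (by rintro rfl; exact ha hjs)]; exact hv.2 j hjs
  obtain ⟨c, hc⟩ := key Finset.univ
  obtain ⟨v, hv, hv0⟩ := Submodule.exists_mem_ne_zero_of_ne_bot hc
  simp only [Submodule.mem_inf, Submodule.mem_iInf, LinearMap.mem_ker, LinearMap.sub_apply,
          LinearMap.smul_apply, Module.End.one_apply, sub_eq_zero] at hv
  exact ⟨c, v, hv.1, hv0, fun j => hv.2 j (Finset.mem_univ _)⟩

/-- The vectors on which `X_j`, `j ≥ m`, acts by the scalar `c j`. -/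
def J (m : ℕ) (c : Fin N → ℤ) : Submodule ℂ W where
  carrier := {v | ∀ j : Fin N, m ≤ j.val → JM ρ j v = (c j : ℂ) • v}
  zero_mem' := fun j _ => by simp
  add_mem' := fun {a b} ha hb j hj => by rw [map_add, ha j hj, hb j hj, smul_add]
  smul_mem' := fun r a ha j hj => by rw [map_smul, ha j hj, smul_comm]

lemma mem_J {m : ℕ} {c : Fin N → ℤ} {v : W} :
    v ∈ J ρ m c ↔ ∀ j : Fin N, m ≤ j.val → JM ρ j v = (c j : ℂ) • v := Iff.rfl

lemma J_map {m : ℕ} {c : Fin N → ℤ} {g : Perm (Fin N)} (hg : g ∈ Sub N m) {v : W}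
    (hv : v ∈ J ρ m c) : ρ g v ∈ J ρ m c := by
  intro j hj
  have : g ∈ Sub N j := fun i hi => hg i (hj.trans hi)
  rw [← JM_comm_Sub_apply ρ this, hv j hj, map_smul]

end plain2

/-! ### Simple branching -/

section branching
variable {N : ℕ} {V : Type} [NormedAddCommGroup V] [InnerProductSpace ℂ V]
variable {ρ : Representation ℂ (Perm (Fin N)) V}

/-- The orthogonal projection to `E` commutes with every operator which, together with its adjoint,
preserves `E`. -/
lemma proj_comm [FiniteDimensional ℂ V] (E : Submodule ℂ V) (T T' : V →ₗ[ℂ] V)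
    (hadj : ∀ u v, inner ℂ (T u) v = inner ℂ u (T' v))
    (h1 : ∀ v ∈ E, T v ∈ E) (h2 : ∀ v ∈ E, T' v ∈ E) (v : V) :
    E.starProjection (T v) = T (E.starProjection v) := by
  refine (Submodule.eq_starProjection_of_mem_orthogonal (h1 _ (E.starProjection_apply_mem v)) ?_)
  rw [← map_sub, Submodule.mem_orthogonal']
  intro u hu
  rw [hadj]
  exact (Submodule.mem_orthogonal' _ _).mp (E.sub_starProjection_mem_orthogonal v) _ (h2 u hu)

lemma inner_map_left (hU : ∀ g u v, inner ℂ (ρ g u) (ρ g v) = inner ℂ u v) (g : Perm (Fin N))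
    (u v : V) : inner ℂ (ρ g u) v = inner ℂ u (ρ g⁻¹ v) := by
  rw [← hU g⁻¹ (ρ g u), ← Module.End.mul_apply, ← map_mul, inv_mul_cancel, map_one]; rfl

/-- `S_{m+1} = S_m ∪ S_m s S_m` for `s` the adjacent transposition of the last two points. -/
lemma Sub_decomp {m : ℕ} (hm : m < N) {g : Perm (Fin N)} (hg : g ∈ Sub N (m + 1)) :
    g ∈ Sub N m ∨ ∃ l : Fin N, l.val + 1 = m ∧ ∃ h₁ ∈ Sub N m, ∃ h₂ ∈ Sub N m,
      g = h₁ * swap l ⟨m, hm⟩ * h₂ := by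
  by_cases hgm : g ⟨m, hm⟩ = ⟨m, hm⟩
  · left
    intro i hi
    rcases hi.eq_or_lt with h | h
    · have : i = ⟨m, hm⟩ := Fin.ext h.symm
      rw [this, hgm]
    · exact hg i h
  · right
    have h1 := Sub_lt hg (i := ⟨m, hm⟩) (Nat.lt_succ_self m)
    have h2 : (g ⟨m, hm⟩).val ≠ m := fun h => hgm (Fin.ext h)
    have h3 : 1 ≤ m := by omega
    set l : Fin N := ⟨m - 1, by omega⟩ with hl
    have hlv : l.val = m - 1 := rfl
    set a := g ⟨m, hm⟩ with ha
    have hs : swap a l ∈ Sub N m := swap_mem_Sub (by omega) (by omega)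
    refine ⟨l, by omega, swap a l, hs, swap l ⟨m, hm⟩ * swap a l * g, ?_, ?_⟩
    · intro i hi
      rcases hi.eq_or_lt with h | h
      · have : i = ⟨m, hm⟩ := Fin.ext h.symm
        rw [this, Perm.mul_apply, ← ha, Perm.mul_apply, swap_apply_left, swap_apply_left]
      · rw [Perm.mul_apply, hg i h, Perm.mul_apply, hs i hi, swap_apply_of_ne_of_ne]
        · rw [Ne, Fin.ext_iff]; omega
        · rw [Ne, Fin.ext_iff]; simp; omega
    · simp only [mul_assoc, swap_mul_self_mul]

/-- Simple branching: the joint eigenspaces of `X_j`, `j ≥ m`, are irreducible under `S_m`. -/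
lemma branching [FiniteDimensional ℂ V] (h : UIrrep ρ) (c : Fin N → ℤ) (m : ℕ) (hm : m ≤ N) :
    ∀ U ≤ J ρ m c, (∀ g ∈ Sub N m, ∀ u ∈ U, ρ g u ∈ U) → U = ⊥ ∨ U = J ρ m c := by
  induction hm using Nat.decreasingInduction with
  | self =>
    intro U hU hinv
    have h1 : J ρ N c = ⊤ := by
      rw [eq_top_iff]; intro v _ j hj; exact absurd j.2 (by omega)
    rw [h1]
    exact h.irred U fun g w hw => hinv g (fun i hi => absurd i.2 (by omega)) w hw
  | of_succ m hm ih =>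
    intro U hU hinv
    by_cases hbot : U = ⊥
    · exact Or.inl hbot
    right
    refine le_antisymm hU ?_
    have hJJ : J ρ m c ≤ J ρ (m + 1) c := fun v hv j hj => hv j (by omega)
    set k : Fin N := ⟨m, hm⟩ with hk
    set S : Submodule ℂ V := Submodule.span ℂ {v | ∃ g ∈ Sub N (m + 1), ∃ u ∈ U, v = ρ g u} with hS
    have hSW : S = J ρ (m + 1) c := by
      refine (ih S ?_ ?_).resolve_left ?_
      · rw [hS, Submodule.span_le]
        rintro _ ⟨g, hg, u, hu, rfl⟩
        exact J_map ρ hg (hJJ (hU hu))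
      · intro g hg u hu
        induction hu using Submodule.span_induction with
        | mem x hx =>
          obtain ⟨g', hg', u, hu, rfl⟩ := hx
          refine Submodule.subset_span ⟨g * g', mul_mem hg hg', u, hu, ?_⟩
          rw [map_mul]; rfl
        | zero => rw [map_zero]; exact zero_mem _
        | add x y _ _ hx hy => rw [map_add]; exact add_mem hx hy
        | smul a x _ hx => rw [map_smul]; exact Submodule.smul_mem _ _ hx
      · intro h0
        apply hbot
        rw [eq_bot_iff, ← h0]
        intro u hu
        exact Submodule.subset_span ⟨1, one_mem _, u, hu, by simp⟩
    -- within the irreducible `S_{m+1}`-space `J ρ (m + 1) c`, the space `J ρ m c` is the eigenspace `E`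
    set E : Submodule ℂ V := LinearMap.ker (JM ρ k - (c k : ℂ) • 1) with hE
    have memE : ∀ v, v ∈ E ↔ JM ρ k v = (c k : ℂ) • v := fun v => by
      simp [hE, sub_eq_zero]
    have hUE : ∀ u ∈ U, u ∈ E := fun u hu => (memE u).mpr (hU hu k le_rfl)
    have hfix : ∀ e ∈ E, E.starProjection e = e := fun e he =>
      Submodule.starProjection_eq_self_iff.mpr he
    have hPg : ∀ g ∈ Sub N m, ∀ v, E.starProjection (ρ g v) = ρ g (E.starProjection v) := by
      intro g hg v
      refine proj_comm E (ρ g) (ρ g⁻¹) (inner_map_left h.inner_map g) ?_ ?_ v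
      · intro v hv
        rw [memE] at hv ⊢
        rw [← JM_comm_Sub_apply ρ hg, hv, map_smul]
      · intro v hv
        rw [memE] at hv ⊢
        rw [← JM_comm_Sub_apply ρ (inv_mem hg), hv, map_smul]
    -- the projection `P (s u)` to `E` stays in `U`: the Hecke relation gives `(c_k - X_l) P (s u) = u`,
    -- and `c_k - X_l` is injective on `E` by `no_repeat` and preserves `U`
    have hkey : ∀ l : Fin N, l.val + 1 = m → ∀ u ∈ U, E.starProjection (ρ (swap l k) u) ∈ U := by
      intro l hl u hu
      have hlk : k.val = l.val + 1 := hl.symm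
      have hxU : ∀ u ∈ U, JM ρ l u ∈ U := by
        intro u hu
        unfold JM
        rw [LinearMap.sum_apply]
        refine sum_mem fun i hi => hinv _ (swap_mem_Sub ?_ (by omega)) u hu
        rw [Finset.mem_Iio, Fin.lt_def] at hi; omega
      have hPx : JM ρ l (E.starProjection (ρ (swap l k) u))
          = E.starProjection (JM ρ l (ρ (swap l k) u)) := by
        refine (proj_comm E _ _ (JM_symm h.inner_map l) ?_ ?_ _).symm <;>
        · intro v hv
          rw [memE] at hv ⊢
          rw [JM_comm_apply, hv, map_smul]
      have h1 := hecke_apply ρ hlk u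
      rw [(memE u).mp (hUE u hu), map_smul] at h1
      have h2 : (c k : ℂ) • E.starProjection (ρ (swap l k) u)
          - JM ρ l (E.starProjection (ρ (swap l k) u)) = u := by
        rw [hPx, ← map_smul, h1, map_add, hfix u (hUE u hu)]; abel
      let T : U →ₗ[ℂ] U := ((c k : ℂ) • (1 : V →ₗ[ℂ] V) - JM ρ l).restrict (fun v hv => by
        simpa using sub_mem (Submodule.smul_mem _ _ hv) (hxU v hv))
      have hker : ∀ v ∈ E, (c k : ℂ) • v - JM ρ l v = 0 → v = 0 := fun v hv h0 =>
        no_repeat h.inner_map hlk (c k) (sub_eq_zero.mp h0).symm ((memE v).mp hv)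
      have hinj : Function.Injective T := by
        rw [← LinearMap.ker_eq_bot, eq_bot_iff]
        intro v hv
        have := congrArg Subtype.val (LinearMap.mem_ker.mp hv)
        exact Subtype.ext (hker v (hUE _ v.2) (by simpa [T] using this))
      obtain ⟨u', hu'⟩ := (LinearMap.injective_iff_surjective.mp hinj) ⟨u, hu⟩
      have h3 : (c k : ℂ) • (u' : V) - JM ρ l u' = u := by
        simpa [T] using congrArg Subtype.val hu'
      have h4 : E.starProjection (ρ (swap l k) u) - u' = 0 := by
        refine hker _ (sub_mem (E.starProjection_apply_mem _) (hUE _ u'.2)) ?_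
        rw [smul_sub, map_sub, sub_sub_sub_comm, h2, h3, sub_self]
      rw [sub_eq_zero.mp h4]; exact u'.2
    have hPW : ∀ w ∈ S, E.starProjection w ∈ U := by
      intro w hw
      induction hw using Submodule.span_induction with
      | mem x hx =>
        obtain ⟨g, hg, u, hu, rfl⟩ := hx
        rcases Sub_decomp hm hg with hg | ⟨l, hl, h₁, hh₁, h₂, hh₂, rfl⟩
        · rw [hfix _ (hUE _ (hinv g hg u hu))]; exact hinv g hg u hu
        · rw [map_mul, map_mul, Module.End.mul_apply, Module.End.mul_apply, hPg _ hh₁]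
          exact hinv _ hh₁ _ (hkey l hl _ (hinv _ hh₂ _ hu))
      | zero => rw [map_zero]; exact zero_mem _
      | add x y _ _ hx hy => rw [map_add]; exact add_mem hx hy
      | smul a x _ hx => rw [map_smul]; exact Submodule.smul_mem _ _ hx
    intro v hv
    rw [← hfix v ((memE v).mpr (hv k le_rfl))]
    exact hPW v (hSW ▸ hJJ hv)

end branching

/-! ### The Gelfand–Tsetlin basis -/

section contents
variable {N : ℕ} {V : Type} [NormedAddCommGroup V] [InnerProductSpace ℂ V]
variable {ρ : Representation ℂ (Perm (Fin N)) V}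

/-- Joint eigenvectors with different content vectors are orthogonal. -/
lemma joint_orth (hU : ∀ g u v, inner ℂ (ρ g u) (ρ g v) = inner ℂ u v) {c c' : Fin N → ℤ}
    (hc : c ≠ c') {v w : V} (hv : v ∈ J ρ 0 c) (hw : w ∈ J ρ 0 c') : inner ℂ v w = (0 : ℂ) := by
  obtain ⟨j, hj⟩ := Function.ne_iff.mp hc
  have h1 := JM_symm hU j v w
  rw [hv j (Nat.zero_le _), hw j (Nat.zero_le _), inner_smul_left, inner_smul_right] at h1
  simp only [map_intCast] at h1
  have h2 : ((c j : ℂ) - c' j) * inner ℂ v w = 0 := by rw [sub_mul, h1, sub_self]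
  rcases mul_eq_zero.mp h2 with h3 | h3
  · exact absurd (by exact_mod_cast sub_eq_zero.mp h3) hj
  · exact h3

/-- The joint eigenspaces of all Jucys–Murphy elements are lines: `branching` for the trivial
group `S_0`. -/
lemma J_zero_line [FiniteDimensional ℂ V] (h : UIrrep ρ) {c : Fin N → ℤ} {v w : V}
    (hv : v ∈ J ρ 0 c) (hw : w ∈ J ρ 0 c) (hv0 : v ≠ 0) : w ∈ Submodule.span ℂ {v} := by
  have := branching h c 0 (Nat.zero_le _) (Submodule.span ℂ {v})
    (by rw [Submodule.span_singleton_le_iff_mem]; exact hv)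
    (by
      intro g hg u hu
      have : g = 1 := Equiv.ext fun i => hg i (Nat.zero_le _)
      rw [this, map_one]; exact hu)
  rw [this.resolve_left (by simpa using hv0)]
  exact hw

/-- The content vectors occurring in `ρ`. -/
abbrev Cont (ρ : Representation ℂ (Perm (Fin N)) V) : Type := {c : Fin N → ℤ // J ρ 0 c ≠ ⊥}

/-- A Gelfand–Tsetlin basis: an orthonormal basis of joint Jucys–Murphy eigenvectors with integral,
pairwise distinct content vectors, which are rearrangements of one another. -/
structure GZ (ρ : Representation ℂ (Perm (Fin N)) V) {ι : Type} [Fintype ι]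
    (b : OrthonormalBasis ι ℂ V) (c : ι → Fin N → ℤ) : Prop where
  eig : ∀ i j, JM ρ j (b i) = (c i j : ℂ) • b i
  inj : Function.Injective c
  perm : ∀ i l, ∃ σ : Perm (Fin N), c l = c i ∘ σ

/-- Any two content vectors of an irreducible representation are rearrangements of one another:
the joint eigenvectors whose contents rearrange a given one span a subspace stable under adjacent
transpositions, by `swap_decomp`. -/
lemma contents_perm [FiniteDimensional ℂ V] (h : UIrrep ρ) {c c' : Fin N → ℤ} (hc : J ρ 0 c ≠ ⊥)
    (hc' : J ρ 0 c' ≠ ⊥) : ∃ σ : Perm (Fin N), c' = c ∘ σ := by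
  by_contra hno
  push Not at hno
  set S : Set V := {v | ∃ σ : Perm (Fin N), v ∈ J ρ 0 (c ∘ σ)} with hS
  set M := Submodule.span ℂ S with hM
  have hadj : ∀ j j' : Fin N, j'.val = j.val + 1 → ∀ w ∈ M, ρ (swap j j') w ∈ M := by
    intro j j' hjj w hw
    induction hw using Submodule.span_induction with
    | mem v hv =>
      obtain ⟨σ, hv⟩ := hv
      have e1 := hv j (Nat.zero_le _)
      have e2 := hv j' (Nat.zero_le _)
      simp only [Function.comp_apply] at e1 e2
      by_cases hab : c (σ j) = c (σ j')
      · rw [← hab] at e2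
        rw [no_repeat h.inner_map hjj _ e1 e2, map_zero]; exact zero_mem _
      · have hd := swap_decomp ρ hjj _ _ (by exact_mod_cast hab) e1 e2
        set r : ℂ := ((c (σ j') : ℂ) - c (σ j))⁻¹
        have e3 : ρ (swap j j') v = (ρ (swap j j') v - r • v) + r • v := by abel
        rw [e3]
        refine add_mem (Submodule.subset_span ⟨σ * swap j j', ?_⟩)
          (Submodule.smul_mem _ _ (Submodule.subset_span ⟨σ, hv⟩))
        intro l _
        by_cases h1 : l = j
        · subst h1; rw [hd.1]; simp
        by_cases h2 : l = j'
        · subst h2; rw [hd.2]; simp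
        rw [map_sub, map_smul, ← JM_comm_swap ρ hjj h1 h2, hv l (Nat.zero_le _)]
        simp only [Function.comp_apply, Perm.mul_apply, swap_apply_of_ne_of_ne h1 h2, smul_sub]
        rw [smul_comm, map_smul]
    | zero => rw [map_zero]; exact zero_mem _
    | add x y _ _ hx hy => rw [map_add]; exact add_mem hx hy
    | smul a x _ hx => rw [map_smul]; exact Submodule.smul_mem _ _ hx
  have hall : ∀ g : Perm (Fin N), ∀ w ∈ M, ρ g w ∈ M := by
    let Q : Submonoid (Perm (Fin N)) :=
      { carrier := {g | ∀ w ∈ M, ρ g w ∈ M}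
        mul_mem' := fun {a b} ha hb w hw => by rw [map_mul]; exact ha _ (hb _ hw)
        one_mem' := fun w hw => by rw [map_one]; exact hw }
    intro g
    suffices hQ : Q = ⊤ by
      have : g ∈ Q := by rw [hQ]; trivial
      exact this
    rcases N with _ | n
    · rw [eq_top_iff]; intro g _; rw [Subsingleton.elim g 1]; exact one_mem _
    · rw [eq_top_iff, ← Equiv.Perm.mclosure_swap_castSucc_succ n, Submonoid.closure_le]
      rintro _ ⟨i, rfl⟩
      exact hadj _ _ (by simp)
  have hSM : S ⊆ M := Submodule.subset_span
  have htop : M = ⊤ := by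
    refine (h.irred M hall).resolve_left fun hb => hc ?_
    rw [eq_bot_iff, ← hb]
    exact fun v hv => hSM ⟨1, hv⟩
  obtain ⟨u, hu, hu0⟩ := Submodule.exists_mem_ne_zero_of_ne_bot hc'
  have horth : ∀ w ∈ M, inner ℂ w u = (0 : ℂ) := by
    intro w hw
    induction hw using Submodule.span_induction with
    | mem v hv =>
      obtain ⟨σ, hv⟩ := hv
      exact joint_orth h.inner_map (hno σ).symm hv hu
    | zero => rw [inner_zero_left]
    | add x y _ _ hx hy => rw [inner_add_left, hx, hy, add_zero]
    | smul a x _ hx => rw [inner_smul_left, hx, mul_zero]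
  exact hu0 (inner_self_eq_zero.mp (horth u (htop ▸ trivial)))

/-- Every irreducible unitary representation has a Gelfand–Tsetlin basis: the orthogonal complement
of the span of the joint eigenvectors is stable under the Jucys–Murphy elements, so it would contain
a further joint eigenvector by `exists_joint`. -/
lemma exists_GZ [FiniteDimensional ℂ V] (h : UIrrep ρ) :
    ∃ (ι : Type) (_ : Fintype ι) (b : OrthonormalBasis ι ℂ V) (c : ι → Fin N → ℤ), GZ ρ b c := by
  have hex : ∀ c : Cont ρ, ∃ v ∈ J ρ 0 c.1, ‖v‖ = 1 := by
    intro c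
    obtain ⟨u, hu, hu0⟩ := Submodule.exists_mem_ne_zero_of_ne_bot c.2
    exact ⟨((‖u‖ : ℂ)⁻¹) • u, Submodule.smul_mem _ _ hu, norm_smul_inv_norm hu0⟩
  choose v hv hv1 using hex
  have hon : Orthonormal ℂ v :=
    ⟨hv1, fun c c' hcc => joint_orth h.inner_map (fun h => hcc (Subtype.ext h)) (hv c) (hv c')⟩
  have hfin : Finite (Cont ρ) := hon.linearIndependent.finite
  have hft : Fintype (Cont ρ) := Fintype.ofFinite _
  have hspan : ⊤ ≤ Submodule.span ℂ (Set.range v) := by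
    rw [top_le_iff, ← Submodule.orthogonal_eq_bot_iff]
    by_contra hne
    obtain ⟨c, w, hw, hw0, hcw⟩ := exists_joint ρ _ hne (by
      intro j u hu
      rw [Submodule.mem_orthogonal'] at hu ⊢
      intro x hx
      rw [JM_symm h.inner_map]
      refine hu _ ?_
      induction hx using Submodule.span_induction with
      | mem x hx =>
        obtain ⟨c, rfl⟩ := hx
        rw [hv c j (Nat.zero_le _)]
        exact Submodule.smul_mem _ _ (Submodule.subset_span ⟨c, rfl⟩)
      | zero => rw [map_zero]; exact zero_mem _
      | add x y _ _ hx hy => rw [map_add]; exact add_mem hx hy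
      | smul a x _ hx => rw [map_smul]; exact Submodule.smul_mem _ _ hx)
    have hwJ : w ∈ J ρ 0 c := fun j _ => hcw j
    have hcb : J ρ 0 c ≠ ⊥ := fun hb => hw0 (by rw [hb] at hwJ; simpa using hwJ)
    have h1 := J_zero_line h hwJ (hv ⟨c, hcb⟩) hw0
    obtain ⟨r, hr⟩ := Submodule.mem_span_singleton.mp h1
    have h2 : inner ℂ (v ⟨c, hcb⟩) (v ⟨c, hcb⟩) = (0 : ℂ) := by
      nth_rw 2 [← hr]
      rw [inner_smul_right, (Submodule.mem_orthogonal _ _).mp hw _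
        (Submodule.subset_span ⟨_, rfl⟩), mul_zero]
    have h3 := hv1 ⟨c, hcb⟩
    rw [inner_self_eq_zero.mp h2, norm_zero] at h3
    exact zero_ne_one h3
  refine ⟨Cont ρ, hft, OrthonormalBasis.mk hon hspan, fun c => c.1, ?_, ?_, ?_⟩
  · intro c j
    rw [OrthonormalBasis.coe_mk]
    exact hv c j (Nat.zero_le _)
  · exact fun c c' hcc => Subtype.ext hcc
  · exact fun c c' => contents_perm h c.2 c'.2

end contents

/-! ### Endomorphism algebras and rearrangements of tails -/

section dimension

/-- A unitary representation of dimension `d` satisfies `d² ≤ |H| · dim End_H`. -/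
lemma finrank_sq_le {H W : Type} [Group H] [Fintype H] [NormedAddCommGroup W]
    [InnerProductSpace ℂ W] [FiniteDimensional ℂ W] (σ : Representation ℂ H W)
    (hU : ∀ g u v, inner ℂ (σ g u) (σ g v) = inner ℂ u v) :
    (Module.finrank ℂ W) ^ 2 ≤ Fintype.card H * Module.finrank ℂ (σ.IntertwiningMap σ) := by
  have hcard : (Nat.card H : ℂ) ≠ 0 := by
    exact_mod_cast Nat.card_pos.ne'
  have : Invertible (Nat.card H : ℂ) := invertibleOfNonzero hcard
  have h1 := Representation.card_inv_mul_sum_char_mul_char_eq_finrank σ σ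
  have hconj : ∀ g, σ.character g⁻¹ = starRingEnd ℂ (σ.character g) := by
    intro g
    unfold Representation.character
    rw [LinearMap.trace_eq_sum_inner _ (stdOrthonormalBasis ℂ W),
      LinearMap.trace_eq_sum_inner _ (stdOrthonormalBasis ℂ W), map_sum]
    refine Finset.sum_congr rfl fun i _ => ?_
    rw [inner_conj_symm, ← hU g, ← Module.End.mul_apply, ← map_mul, mul_inv_cancel, map_one]
    rfl
  have h2 : ∑ g, σ.character g * σ.character g⁻¹
      = (Nat.card H : ℂ) * Module.finrank ℂ (σ.IntertwiningMap σ) := by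
    rw [← h1, mul_inv_cancel_left₀ hcard]
  have h3 : (∑ g, Complex.normSq (σ.character g) : ℝ)
      = (Nat.card H : ℝ) * Module.finrank ℂ (σ.IntertwiningMap σ) := by
    have : ((∑ g, Complex.normSq (σ.character g) : ℝ) : ℂ)
      = (((Nat.card H : ℝ) * Module.finrank ℂ (σ.IntertwiningMap σ) : ℝ) : ℂ) := by
      push_cast
      rw [← h2]
      refine Finset.sum_congr rfl fun g _ => ?_
      rw [hconj, Complex.mul_conj]
    exact_mod_cast this
  have h4 : Complex.normSq (σ.character 1) ≤ ∑ g, Complex.normSq (σ.character g) :=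
    Finset.single_le_sum (f := fun g => Complex.normSq (σ.character g))
      (fun g _ => Complex.normSq_nonneg _) (Finset.mem_univ 1)
  have h5 : σ.character 1 = Module.finrank ℂ W := by
    unfold Representation.character
    rw [map_one]; exact LinearMap.trace_one ℂ W
  rw [h3, h5, Nat.card_eq_fintype_card] at h4
  have h6 : Complex.normSq (Module.finrank ℂ W : ℂ) = ((Module.finrank ℂ W : ℝ)) ^ 2 := by
    rw [← Complex.ofReal_natCast, Complex.normSq_ofReal, sq]
  rw [h6] at h4
  exact_mod_cast h4

/-- The positions `≥ n`. -/
abbrev Tl (N n : ℕ) : Type := {j : Fin N // n ≤ j.val}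

lemma card_Tl (N n : ℕ) : Fintype.card (Tl N n) = N - n := by
  have e : Tl N n ≃ Fin (N - n) :=
    { toFun := fun j => ⟨j.1.1 - n, by have := j.1.2; have := j.2; omega⟩
      invFun := fun i => ⟨⟨i.1 + n, by have := i.2; omega⟩, by simp⟩
      left_inv := fun j => by apply Subtype.ext; apply Fin.ext; have := j.2; simp; omega
      right_inv := fun i => by apply Fin.ext; simp }
  rw [Fintype.card_congr e, Fintype.card_fin]

lemma card_Sub (N n : ℕ) (hn : n ≤ N) : Fintype.card (Sub N n) = n.factorial := by
  have e1 : Sub N n ≃ {f : Perm (Fin N) // ∀ a : Fin N, ¬ a.val < n → f a = a} :=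
    Equiv.subtypeEquivRight fun f => by
      rw [mem_Sub]; exact forall_congr' fun i => by rw [not_lt]
  have e2 : {a : Fin N // a.val < n} ≃ Fin n :=
    { toFun := fun j => ⟨j.1.1, j.2⟩
      invFun := fun i => ⟨⟨i.1, i.2.trans_le hn⟩, i.2⟩
      left_inv := fun j => rfl
      right_inv := fun i => rfl }
  rw [Fintype.card_congr e1,
    ← Fintype.card_congr (Equiv.Perm.subtypeEquivSubtypePerm fun a : Fin N => a.val < n),
    Fintype.card_perm, Fintype.card_congr e2, Fintype.card_fin]

/-- Two rearrangements of the same sequence which agree before `n` have tails that are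
rearrangements of one another. -/
lemma tail_perm {N n : ℕ} {c c' : Fin N → ℤ} {σ : Perm (Fin N)} (h : c' = c ∘ σ)
    (hh : ∀ j : Fin N, j.val < n → c' j = c j) :
    ∃ τ : Perm (Tl N n), ∀ j : Tl N n, c' j.1 = c (τ j).1 := by
  have hcard : ∀ x : ℤ, Fintype.card {j : Tl N n // c' j.1 = x}
      = Fintype.card {j : Tl N n // c j.1 = x} := by
    intro x
    have key : ∀ f : Fin N → ℤ, Fintype.card {j : Tl N n // f j.1 = x}
        = (Finset.univ.filter fun j : Fin N => f j = x ∧ n ≤ j.val).card := by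
      intro f
      rw [← Fintype.card_subtype]
      exact Fintype.card_congr
        { toFun := fun j => ⟨j.1.1, j.2, j.1.2⟩
          invFun := fun j => ⟨⟨j.1, j.2.2⟩, j.2.1⟩
          left_inv := fun j => rfl
          right_inv := fun j => rfl }
    have split : ∀ f : Fin N → ℤ, (Finset.univ.filter fun j : Fin N => f j = x).card
        = (Finset.univ.filter fun j : Fin N => f j = x ∧ n ≤ j.val).card
        + (Finset.univ.filter fun j : Fin N => f j = x ∧ ¬ n ≤ j.val).card := by
      intro f
      rw [← Finset.filter_filter, ← Finset.filter_filter,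
        Finset.card_filter_add_card_filter_not]
    have tot : (Finset.univ.filter fun j : Fin N => c' j = x).card
        = (Finset.univ.filter fun j : Fin N => c j = x).card := by
      refine Finset.card_bij (fun j _ => σ j) ?_ ?_ ?_
      · intro j hj
        simp only [Finset.mem_filter, Finset.mem_univ, true_and] at hj ⊢
        rw [← hj, h]; rfl
      · intro a _ b _ hab; exact σ.injective hab
      · intro j hj
        simp only [Finset.mem_filter, Finset.mem_univ, true_and] at hj
        exact ⟨σ⁻¹ j, by simp [h, hj], by simp⟩
    have hd : (Finset.univ.filter fun j : Fin N => c' j = x ∧ ¬ n ≤ j.val)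
        = (Finset.univ.filter fun j : Fin N => c j = x ∧ ¬ n ≤ j.val) := by
      ext j
      simp only [Finset.mem_filter, Finset.mem_univ, true_and]
      constructor
      · rintro ⟨h1, h2⟩; exact ⟨by rw [← hh j (by omega), h1], h2⟩
      · rintro ⟨h1, h2⟩; exact ⟨by rw [hh j (by omega), h1], h2⟩
    rw [key, key]
    have s1 := split c'
    have s2 := split c
    rw [hd] at s1
    omega
  refine ⟨Equiv.ofFiberEquiv (f := fun j : Tl N n => c' j.1) (g := fun j : Tl N n => c j.1)
    fun x => Fintype.equivOfCardEq (hcard x), fun j => ?_⟩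
  exact (Equiv.ofFiberEquiv_map (f := fun j : Tl N n => c' j.1)
    (g := fun j : Tl N n => c j.1) _ j).symm

variable {N : ℕ} {V : Type} [NormedAddCommGroup V] [InnerProductSpace ℂ V]
variable {ρ : Representation ℂ (Perm (Fin N)) V} {ι : Type} [Fintype ι]
  {b : OrthonormalBasis ι ℂ V} {c : ι → Fin N → ℤ}

/-- At most `(N - n)!` basis vectors share their first `n` contents, since their tails are
rearrangements of a single one. -/
lemma card_same_head (hG : GZ ρ b c) (n : ℕ) (i : ι) :
    (Finset.univ.filter fun l => ∀ j : Fin N, j.val < n → c l j = c i j).card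
      ≤ (N - n).factorial := by
  have hex : ∀ l : ι, (∀ j : Fin N, j.val < n → c l j = c i j) →
      ∃ τ : Perm (Tl N n), ∀ j : Tl N n, c l j.1 = c i (τ j).1 := by
    intro l hl
    obtain ⟨σ, hσ⟩ := hG.perm i l
    exact tail_perm hσ hl
  choose! τ hτ using hex
  rw [← card_Tl N n, ← Fintype.card_perm, ← Finset.card_univ]
  refine Finset.card_le_card_of_injOn τ (fun _ _ => Finset.mem_coe.mpr (Finset.mem_univ _)) ?_
  intro l hl l' hl' hll
  simp only [Finset.coe_filter, Finset.mem_univ, true_and, Set.mem_ofPred_eq] at hl hl'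
  apply hG.inj
  funext j
  by_cases hj : j.val < n
  · rw [hl j hj, hl' j hj]
  · have := hτ l hl ⟨j, by omega⟩
    rw [hll] at this
    exact this.trans (hτ l' hl' ⟨j, by omega⟩).symm

end dimension

/-! ### Basis vectors with prescribed tails -/

section dimbound
variable {N : ℕ} {V : Type} [NormedAddCommGroup V] [InnerProductSpace ℂ V]
variable {ρ : Representation ℂ (Perm (Fin N)) V} {ι : Type} [Fintype ι]
  {b : OrthonormalBasis ι ℂ V} {c : ι → Fin N → ℤ}

/-- An eigenvector of `X_j` with eigenvalue `a` only involves basis vectors with `j`-th content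
`a`. -/
lemma coeff_eq (hU : ∀ g u v, inner ℂ (ρ g u) (ρ g v) = inner ℂ u v) (hG : GZ ρ b c)
    {j : Fin N} {a : ℤ} {v : V} (hv : JM ρ j v = (a : ℂ) • v) {l : ι}
    (hl : inner ℂ (b l) v ≠ 0) : c l j = a := by
  have h1 := JM_symm hU j (b l) v
  rw [hG.eig, hv, inner_smul_left, inner_smul_right] at h1
  have := mul_right_cancel₀ hl h1
  simpa using this

/-- The restriction of a content vector to the positions `≥ n`; its values at the positions `< n`
are called its head. -/
def tail {N : ℕ} (n : ℕ) (f : Fin N → ℤ) : Tl N n → ℤ := fun j => f j.1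

lemma mem_J_self (hG : GZ ρ b c) (n : ℕ) (i : ι) : b i ∈ J ρ n (c i) := fun j _ => hG.eig i j

lemma tail_eq_of_coeff (hU : ∀ g u v, inner ℂ (ρ g u) (ρ g v) = inner ℂ u v) (hG : GZ ρ b c)
    {n : ℕ} {i l : ι} {v : V} (hv : v ∈ J ρ n (c i)) (hl : inner ℂ (b l) v ≠ 0) :
    tail n (c l) = tail n (c i) := by
  funext j
  exact coeff_eq hU hG (hv j.1 j.2) hl

/-- An `S_n`-endomorphism of `V` is determined on an irreducible constituent by the matrix entries
of the image of one basis vector along basis vectors with the same head. -/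
lemma vanish (h : UIrrep ρ) (hG : GZ ρ b c) {n : ℕ} (hn : n ≤ N) (A : V →ₗ[ℂ] V)
    (hA : ∀ g ∈ Sub N n, ∀ v, A (ρ g v) = ρ g (A v)) (i : ι)
    (h0 : ∀ l, (∀ j : Fin N, j.val < n → c l j = c i j) → inner ℂ (b l) (A (b i)) = (0 : ℂ)) :
    ∀ v ∈ J ρ n (c i), A v = 0 := by
  have : FiniteDimensional ℂ V := b.toBasis.finiteDimensional_of_finite
  have hJM : ∀ j : Fin N, j.val < n → JM ρ j (A (b i)) = (c i j : ℂ) • A (b i) := by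
    intro j hj
    rw [← map_smul, ← hG.eig i j]
    unfold JM
    rw [LinearMap.sum_apply, LinearMap.sum_apply, map_sum]
    refine Finset.sum_congr rfl fun a ha => ?_
    rw [Finset.mem_Iio, Fin.lt_def] at ha
    exact (hA _ (swap_mem_Sub (by omega) hj) _).symm
  have hAi : A (b i) = 0 := by
    rw [← b.sum_repr (A (b i))]
    refine Finset.sum_eq_zero fun l _ => ?_
    rw [b.repr_apply_apply]
    by_contra hne
    have hne' : inner ℂ (b l) (A (b i)) ≠ 0 := fun h => hne (by rw [h, zero_smul])
    exact hne' (h0 l fun j hj => coeff_eq h.inner_map hG (hJM j hj) hne')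
  have hU := branching h (c i) n hn (J ρ n (c i) ⊓ LinearMap.ker A) inf_le_left (by
    intro g hg u hu
    refine ⟨J_map ρ hg hu.1, ?_⟩
    change A (ρ g u) = 0
    rw [hA g hg, LinearMap.mem_ker.mp hu.2, map_zero])
  have hne : J ρ n (c i) ⊓ LinearMap.ker A ≠ ⊥ := by
    intro hb
    have : b i ∈ J ρ n (c i) ⊓ LinearMap.ker A := ⟨mem_J_self hG n i, hAi⟩
    rw [hb, Submodule.mem_bot] at this
    exact b.orthonormal.ne_zero i this
  intro v hv
  rw [← hU.resolve_left hne] at hv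
  exact hv.2

/-- The number of basis vectors whose tail lies in `T` is at most `√(n! (N - n)! #T)`. These vectors
span a representation `W` of `S_n`, the sum over `t ∈ T` of the joint eigenspaces of `X_j`, `j ≥ n`,
with eigenvalues `t`. Each of these is irreducible, so by `vanish` an endomorphism of `W` is
determined by at most `#T (N - n)!` matrix entries, and `finrank_sq_le` applies. -/
lemma card_tail_sq_le (h : UIrrep ρ) (hG : GZ ρ b c) {n : ℕ} (hn : n ≤ N)
    (T : Finset (Tl N n → ℤ)) :
    (Finset.univ.filter fun i => tail n (c i) ∈ T).card ^ 2
      ≤ n.factorial * (T.card * (N - n).factorial) := by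
  have hfd : FiniteDimensional ℂ V := b.toBasis.finiteDimensional_of_finite
  have hU := h.inner_map
  set S := Finset.univ.filter fun i => tail n (c i) ∈ T with hS
  have memS : ∀ i, i ∈ S ↔ tail n (c i) ∈ T := fun i => by simp [hS]
  let W : Submodule ℂ V :=
    { carrier := {v | ∀ l, l ∉ S → inner ℂ (b l) v = (0 : ℂ)}
      zero_mem' := fun l _ => inner_zero_right _
      add_mem' := fun {x y} hx hy l hl => by rw [inner_add_right, hx l hl, hy l hl, add_zero]
      smul_mem' := fun r x hx l hl => by rw [inner_smul_right, hx l hl, mul_zero] }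
  have hJW : ∀ i ∈ S, J ρ n (c i) ≤ W := by
    intro i hi v hv l hl
    by_contra hne
    apply hl
    rw [memS, tail_eq_of_coeff hU hG hv hne, ← memS]; exact hi
  have hbW : ∀ i ∈ S, b i ∈ W := fun i hi => hJW i hi (mem_J_self hG n i)
  have hWinv : ∀ g ∈ Sub N n, ∀ v ∈ W, ρ g v ∈ W := by
    intro g hg v hv l hl
    have e1 : inner ℂ (b l) (ρ g v) = inner ℂ (ρ g⁻¹ (b l)) v := by
      rw [inner_map_left hU, inv_inv]
    rw [e1, ← b.sum_inner_mul_inner]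
    refine Finset.sum_eq_zero fun i _ => ?_
    by_cases hi : i ∈ S
    · have : inner ℂ (b i) (ρ g⁻¹ (b l)) = (0 : ℂ) := by
        by_contra hne
        have := tail_eq_of_coeff hU hG (J_map ρ (inv_mem hg) (mem_J_self hG n l)) hne
        apply hl
        rw [memS, ← this, ← memS]; exact hi
      rw [← inner_conj_symm, this, map_zero, zero_mul]
    · rw [hv i hi, mul_zero]
  let σ : Representation ℂ (Sub N n) W :=
    { toFun := fun g => (ρ g.1).restrict (hWinv g.1 g.2)
      map_one' := by ext v; simp
      map_mul' := fun g g' => by ext v; simp }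
  have hσ : ∀ (g : Sub N n) (w : W), ((σ g w : W) : V) = ρ g.1 w := fun g w => rfl
  have h1 := finrank_sq_le σ (fun g u v => by
    rw [Submodule.coe_inner, hσ, hσ, hU, Submodule.coe_inner])
  rw [card_Sub N n hn] at h1
  have h2 : S.card ≤ Module.finrank ℂ W := by
    have hli : LinearIndependent ℂ (fun i : S => (⟨b i, hbW i.1 i.2⟩ : W)) := by
      apply LinearIndependent.of_comp W.subtype
      exact b.orthonormal.linearIndependent.comp (fun i : S => i.1) Subtype.val_injective
    have := hli.fintype_card_le_finrank
    rwa [Fintype.card_coe] at this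
  have h3 : Module.finrank ℂ (σ.IntertwiningMap σ) ≤ T.card * (N - n).factorial := by
    set T₀ := S.image fun i => tail n (c i) with hT₀
    have hT₀T : T₀ ⊆ T := by
      intro t ht
      obtain ⟨i, hi, rfl⟩ := Finset.mem_image.mp ht
      exact (memS i).mp hi
    have hrep : ∀ t : T₀, ∃ i ∈ S, tail n (c i) = t.1 := fun t => Finset.mem_image.mp t.2
    choose rep hrepS hrep using hrep
    -- one basis vector `rep t` for each tail, and the basis vectors that share its head
    let P := Σ t : T₀, {l : ι // ∀ j : Fin N, j.val < n → c l j = c (rep t) j}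
    let Φ : σ.IntertwiningMap σ →ₗ[ℂ] (P → ℂ) :=
      { toFun := fun φ p => inner ℂ (b p.2.1) ((φ ⟨b (rep p.1), hbW _ (hrepS p.1)⟩ : W) : V)
        map_add' := fun φ ψ => by
          funext p
          simp
        map_smul' := fun r φ => by
          funext p
          simp }
    have hΦ : Function.Injective Φ := by
      rw [← LinearMap.ker_eq_bot, eq_bot_iff]
      intro φ hφ
      have hφ' : ∀ p : P,
          inner ℂ (b p.2.1) ((φ ⟨b (rep p.1), hbW _ (hrepS p.1)⟩ : W) : V) = (0 : ℂ) :=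
        fun p => congrFun (LinearMap.mem_ker.mp hφ) p
      -- extend `φ` by zero on the orthogonal complement, so that `vanish` applies
      let A : V →ₗ[ℂ] V := W.subtype ∘ₗ φ.toLinearMap ∘ₗ (W.orthogonalProjectionOnto : V →ₗ[ℂ] W)
      have hAW : ∀ w : W, A w = (φ w : W) := by
        intro w
        change ((φ (W.orthogonalProjectionOnto w) : W) : V) = _
        rw [Submodule.orthogonalProjectionOnto_mem_subspace_eq_self]
      have hA : ∀ g ∈ Sub N n, ∀ v, A (ρ g v) = ρ g (A v) := by
        intro g hg v
        change ((φ (W.orthogonalProjectionOnto (ρ g v)) : W) : V)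
          = ρ g ((φ (W.orthogonalProjectionOnto v) : W) : V)
        have e1 : W.orthogonalProjectionOnto (ρ g v) = σ ⟨g, hg⟩ (W.orthogonalProjectionOnto v) := by
          apply Subtype.ext
          rw [hσ]
          exact proj_comm W (ρ g) (ρ g⁻¹) (inner_map_left hU g) (hWinv g hg)
            (hWinv _ (inv_mem hg)) v
        rw [e1, φ.isIntertwining, hσ]
      have hvan : ∀ i ∈ S, A (b i) = 0 := by
        intro i hi
        set t : T₀ := ⟨tail n (c i), Finset.mem_image_of_mem _ hi⟩ with ht
        refine vanish h hG hn A hA (rep t) (fun l hl => ?_) _ ?_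
        · have := hφ' ⟨t, l, hl⟩
          rw [← this, ← hAW]
        · intro j hj
          have : c (rep t) j = c i j := congrFun (hrep t) ⟨j, hj⟩
          rw [this]; exact hG.eig i j
      rw [Submodule.mem_bot]
      apply Representation.IntertwiningMap.ext
      ext w
      change ((φ w : W) : V) = 0
      rw [← hAW, ← b.sum_repr (w : V), map_sum]
      refine Finset.sum_eq_zero fun i _ => ?_
      rw [b.repr_apply_apply, map_smul]
      by_cases hi : i ∈ S
      · rw [hvan i hi, smul_zero]
      · rw [w.2 i hi, zero_smul]
    refine (LinearMap.finrank_le_finrank_of_injective hΦ).trans ?_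
    rw [Module.finrank_fintype_fun_eq_card, Fintype.card_sigma]
    calc _ ≤ ∑ t : T₀, (N - n).factorial := by
          refine Finset.sum_le_sum fun t _ => ?_
          rw [Fintype.card_subtype]
          exact card_same_head hG n (rep t)
      _ = T₀.card * (N - n).factorial := by simp
      _ ≤ _ := Nat.mul_le_mul_right _ (Finset.card_le_card hT₀T)
  exact (Nat.pow_le_pow_left h2 2).trans (h1.trans (Nat.mul_le_mul_left _ h3))

end dimbound

/-! ### The second moment of the contents -/

/-- The triples `(j, a, b)` with `j ≥ n` and `a ≠ b` both below `j`. -/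
def Ps (N n : ℕ) : Finset (Fin N × Fin N × Fin N) :=
  Finset.univ.filter fun p => n ≤ p.1.val ∧ p.2.1 < p.1 ∧ p.2.2 < p.1 ∧ p.2.1 ≠ p.2.2

/-- The 3-cycle `j ↦ b ↦ a ↦ j`. -/
def gp {N : ℕ} (p : Fin N × Fin N × Fin N) : Perm (Fin N) := swap p.2.1 p.1 * swap p.2.2 p.1

lemma mem_Ps {N n : ℕ} {j a b : Fin N} :
    (j, a, b) ∈ Ps N n ↔ n ≤ j.val ∧ a < j ∧ b < j ∧ a ≠ b := by simp [Ps]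

/-- The 3-cycle recovers its triple: `j` is the largest point moved, `b` the image of `j` and `a`
the image of `b`. -/
lemma gp_inj (N n : ℕ) : Set.InjOn gp (Ps N n : Set (Fin N × Fin N × Fin N)) := by
  have h1 : ∀ j a b : Fin N, (j, a, b) ∈ Ps N n → gp (j, a, b) j = b ∧ gp (j, a, b) b = a ∧
      ∀ i, j < i → gp (j, a, b) i = i := by
    intro j a b h
    obtain ⟨h1, h2, h3, h4⟩ := mem_Ps.mp h
    refine ⟨?_, ?_, ?_⟩
    · simp only [gp, Perm.mul_apply, swap_apply_right]
      exact swap_apply_of_ne_of_ne h4.symm h3.ne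
    · simp [gp]
    · intro i hi
      simp only [gp, Perm.mul_apply]
      rw [swap_apply_of_ne_of_ne (h3.trans hi).ne' hi.ne',
        swap_apply_of_ne_of_ne (h2.trans hi).ne' hi.ne']
  rintro ⟨j, a, b⟩ hp ⟨j', a', b'⟩ hp' hgg
  have e := h1 j a b hp
  have e' := h1 j' a' b' hp'
  have m := mem_Ps.mp hp
  have m' := mem_Ps.mp hp'
  have hj : j = j' := by
    rcases lt_trichotomy j j' with h | h | h
    · have := e.2.2 j' h
      rw [hgg, e'.1] at this
      exact absurd this m'.2.2.1.ne
    · exact h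
    · have := e'.2.2 j h
      rw [← hgg, e.1] at this
      exact absurd this m.2.2.1.ne
  subst hj
  have hb : b = b' := by rw [← e.1, ← e'.1, hgg]
  subst hb
  have ha : a = a' := by rw [← e.2.1, ← e'.2.1, hgg]
  rw [ha]

lemma card_Ps_le (N n : ℕ) : (Ps N n).card ≤ (N - n) * N ^ 2 := by
  have : (Ps N n).card ≤ Fintype.card (Tl N n × Fin N × Fin N) := by
    rw [← Finset.card_univ,
      ← Finset.card_map (s := (Finset.univ : Finset (Tl N n × Fin N × Fin N)))
        ⟨fun x => (x.1.1, x.2), fun x y hxy => by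
          simp only [Prod.mk.injEq] at hxy
          exact Prod.ext (Subtype.ext hxy.1) hxy.2⟩]
    refine Finset.card_le_card fun p hp => ?_
    obtain ⟨j, a, b⟩ := p
    rw [Finset.mem_map]
    exact ⟨(⟨j, (mem_Ps.mp hp).1⟩, a, b), Finset.mem_univ _, rfl⟩
  refine this.trans ?_
  rw [Fintype.card_prod, Fintype.card_prod, card_Tl, Fintype.card_fin, sq]

/-- Among pairs of triples, at most `(N - n) N²` have 3-cycles that are inverse to one another: the
first 3-cycle determines the second. This is the second moment of `∑_{j ≥ n} (X_j² - j)` in the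
regular representation, divided by `N!`. -/
lemma card_pairs_le (N n : ℕ) :
    ((Ps N n ×ˢ Ps N n).filter fun x => gp x.1 * gp x.2 = 1).card ≤ (N - n) * N ^ 2 := by
  refine le_trans ?_ (card_Ps_le N n)
  refine Finset.card_le_card_of_injOn (fun x => x.1) ?_ ?_
  · intro x hx
    simp only [Finset.coe_filter, Finset.mem_product, Set.mem_ofPred_eq] at hx
    exact hx.1.1
  · intro x hx y hy hxy
    simp only [Finset.coe_filter, Finset.mem_product, Set.mem_ofPred_eq] at hx hy hxy
    refine Prod.ext hxy (gp_inj N n hx.1.2 hy.1.2 ?_)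
    have h1 := hx.2
    rw [hxy, ← hy.2] at h1
    exact mul_left_cancel h1

section plain
variable {N : ℕ} {W : Type*} [AddCommGroup W] [Module ℂ W] (ρ : Representation ℂ (Perm (Fin N)) W)

/-- The operator `∑_{j ≥ n} (X_j² - j)`, written as a sum of 3-cycles. -/
noncomputable def QQ (n : ℕ) : W →ₗ[ℂ] W := ∑ p ∈ Ps N n, ρ (gp p)

/-- `X_j²` is `j` plus the sum of the 3-cycles with largest point `j`. -/
lemma JM_sq (j : Fin N) : JM ρ j * JM ρ j = (j.val : ℂ) • (1 : W →ₗ[ℂ] W) +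
    ∑ x ∈ ((Finset.Iio j) ×ˢ (Finset.Iio j)).filter (fun x => x.1 ≠ x.2),
      ρ (gp (j, x.1, x.2)) := by
  have h1 : JM ρ j * JM ρ j
      = ∑ x ∈ (Finset.Iio j) ×ˢ (Finset.Iio j), ρ (gp (j, x.1, x.2)) := by
    unfold JM
    rw [Finset.sum_mul_sum, Finset.sum_product]
    refine Finset.sum_congr rfl fun a _ => Finset.sum_congr rfl fun b _ => ?_
    rw [gp, map_mul]
  rw [h1, ← Finset.sum_filter_add_sum_filter_not _ (fun x : Fin N × Fin N => x.1 = x.2)]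
  congr 1
  have h2 : ∀ x ∈ ((Finset.Iio j) ×ˢ (Finset.Iio j)).filter (fun x : Fin N × Fin N => x.1 = x.2),
      ρ (gp (j, x.1, x.2)) = 1 := by
    intro x hx
    rw [Finset.mem_filter] at hx
    simp only [gp]
    rw [hx.2, swap_mul_self, map_one]
  rw [Finset.sum_congr rfl h2, Finset.sum_const]
  have h3 : (((Finset.Iio j) ×ˢ (Finset.Iio j)).filter
      (fun x : Fin N × Fin N => x.1 = x.2)).card = j.val := by
    rw [← Fin.card_Iio j]
    refine Finset.card_bij' (fun x _ => x.1) (fun a _ => (a, a)) ?_ ?_ ?_ ?_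
    · intro x hx
      simp only [Finset.mem_filter, Finset.mem_product] at hx; exact hx.1.1
    · intro a ha
      simp only [Finset.mem_filter, Finset.mem_product]; exact ⟨⟨ha, ha⟩, trivial⟩
    · intro x hx
      simp only [Finset.mem_filter] at hx; exact Prod.ext rfl hx.2
    · intro a _; rfl
  rw [h3, Nat.cast_smul_eq_nsmul]

lemma QQ_eq (n : ℕ) : QQ ρ n = ∑ j ∈ Finset.univ.filter (fun j : Fin N => n ≤ j.val),
    (JM ρ j * JM ρ j - (j.val : ℂ) • (1 : W →ₗ[ℂ] W)) := by
  simp_rw [JM_sq, add_sub_cancel_left]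
  rw [Finset.sum_sigma', QQ]
  refine Finset.sum_bij' (fun p _ => ⟨p.1, p.2⟩) (fun x _ => (x.1, x.2)) ?_ ?_ ?_ ?_ ?_
  · rintro ⟨j, a, b⟩ hp
    obtain ⟨h1, h2, h3, h4⟩ := mem_Ps.mp hp
    simp [h1, h2, h3, h4]
  · rintro ⟨j, a, b⟩ hp
    simp only [Finset.mem_sigma, Finset.mem_filter, Finset.mem_univ, true_and,
      Finset.mem_product, Finset.mem_Iio] at hp
    exact mem_Ps.mpr ⟨hp.1, hp.2.1.1, hp.2.1.2, hp.2.2⟩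
  · intros; rfl
  · intros; rfl
  · intros; rfl

lemma trace_QQ_sq (n : ℕ) : LinearMap.trace ℂ W (QQ ρ n * QQ ρ n)
    = ∑ x ∈ Ps N n ×ˢ Ps N n, LinearMap.trace ℂ W (ρ (gp x.1 * gp x.2)) := by
  unfold QQ
  rw [Finset.sum_mul_sum, map_sum, Finset.sum_product]
  refine Finset.sum_congr rfl fun p _ => ?_
  rw [map_sum]
  refine Finset.sum_congr rfl fun q _ => ?_
  rw [map_mul ρ]

end plain

section
variable {N : ℕ} {V : Type} [NormedAddCommGroup V] [InnerProductSpace ℂ V]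
variable {ρ : Representation ℂ (Perm (Fin N)) V} {ι : Type} [Fintype ι]
  {b : OrthonormalBasis ι ℂ V} {c : ι → Fin N → ℤ}

/-- Chebyshev bound: few basis vectors have `∑_{j ≥ n} c_j² > 2 (N - n) N`. -/
lemma card_bad_le (hG : GZ ρ b c) (n : ℕ) :
    (((N - n : ℕ) : ℝ) * N) ^ 2 * (Finset.univ.filter fun i =>
        ¬ ∑ j : Tl N n, (tail n (c i) j) ^ 2 ≤ 2 * ((N - n : ℕ) : ℤ) * N).card
      ≤ (∑ x ∈ Ps N n ×ˢ Ps N n, LinearMap.trace ℂ V (ρ (gp x.1 * gp x.2))).re := by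
  set q : ι → ℤ := fun i => ∑ j : Tl N n, ((tail n (c i) j) ^ 2 - (j.1.val : ℤ)) with hq
  have hQ : ∀ i, QQ ρ n (b i) = (q i : ℂ) • b i := by
    intro i
    rw [QQ_eq, LinearMap.sum_apply, hq]
    push_cast
    rw [Finset.sum_smul, Finset.sum_subtype (p := fun j : Fin N => n ≤ j.val) _ (by simp)]
    refine Finset.sum_congr rfl fun j _ => ?_
    rw [LinearMap.sub_apply, Module.End.mul_apply, hG.eig, map_smul, hG.eig, smul_smul,
      LinearMap.smul_apply, Module.End.one_apply, ← sub_smul, tail, sq]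
  have htr : LinearMap.trace ℂ V (QQ ρ n * QQ ρ n) = ((∑ i, (q i : ℝ) ^ 2 : ℝ) : ℂ) := by
    rw [LinearMap.trace_eq_sum_inner _ b]
    push_cast
    refine Finset.sum_congr rfl fun i _ => ?_
    rw [Module.End.mul_apply, hQ, map_smul, hQ, smul_smul, inner_smul_right,
      inner_self_eq_norm_sq_to_K, b.orthonormal.1 i]
    simp [sq]
  rw [← trace_QQ_sq, htr, Complex.ofReal_re]
  set B := Finset.univ.filter fun i =>
        ¬ ∑ j : Tl N n, (tail n (c i) j) ^ 2 ≤ 2 * ((N - n : ℕ) : ℤ) * N with hB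
  calc (((N - n : ℕ) : ℝ) * N) ^ 2 * B.card
      = ∑ i ∈ B, (((N - n : ℕ) : ℝ) * N) ^ 2 := by rw [Finset.sum_const, nsmul_eq_mul, mul_comm]
    _ ≤ ∑ i ∈ B, (q i : ℝ) ^ 2 := by
        refine Finset.sum_le_sum fun i hi => ?_
        rw [hB, Finset.mem_filter, not_le] at hi
        have h1 : ∑ j : Tl N n, (j.1.val : ℤ) ≤ ((N - n : ℕ) : ℤ) * N := by
          calc ∑ j : Tl N n, (j.1.val : ℤ) ≤ ∑ j : Tl N n, (N : ℤ) :=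
                Finset.sum_le_sum fun j _ => by exact_mod_cast j.1.2.le
            _ = _ := by rw [Finset.sum_const, Finset.card_univ, card_Tl, nsmul_eq_mul]
        -- the squared contents sum to more than `2 (N - n) N`, and `∑ j` is at most `(N - n) N`
        have h2 : ((N - n : ℕ) : ℤ) * N ≤ q i := by
          rw [hq]; simp only [Finset.sum_sub_distrib]; linarith [hi.2]
        have h3 : ((N - n : ℕ) : ℝ) * N ≤ q i := by exact_mod_cast h2
        gcongr
    _ ≤ _ := Finset.sum_le_sum_of_subset_of_nonneg (Finset.subset_univ _)
        fun i _ _ => sq_nonneg _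

/-- The finitely many content tails with `∑ t_j² ≤ 2 (N - n) N`. -/
def GoodT (N n : ℕ) : Set (Tl N n → ℤ) :=
  {t | ∑ j, t j ^ 2 ≤ 2 * ((N - n : ℕ) : ℤ) * N}

/-- For an irreducible unitary representation of dimension `d`: all but `bad` vectors of a
Gelfand–Tsetlin basis have their tail in `GoodT N n`, `card_tail_sq_le` bounds the number of those,
and the second moment of the contents bounds `bad`. -/
lemma structure_bound [FiniteDimensional ℂ V] (h : UIrrep ρ) {n : ℕ} (hn : n ≤ N)
    (T : Finset (Tl N n → ℤ)) (hT : ∀ t, t ∈ T ↔ t ∈ GoodT N n) :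
    ∃ bad : ℕ, bad ≤ Module.finrank ℂ V ∧
      (Module.finrank ℂ V - bad) ^ 2 ≤ n.factorial * (T.card * (N - n).factorial) ∧
      (((N - n : ℕ) : ℝ) * N) ^ 2 * bad
        ≤ (∑ x ∈ Ps N n ×ˢ Ps N n, LinearMap.trace ℂ V (ρ (gp x.1 * gp x.2))).re := by
  obtain ⟨ι, _, b, c, hG⟩ := exists_GZ h
  have hd : Module.finrank ℂ V = (Finset.univ.filter fun i => tail n (c i) ∈ T).card +
      (Finset.univ.filter fun i =>
        ¬ ∑ j : Tl N n, (tail n (c i) j) ^ 2 ≤ 2 * ((N - n : ℕ) : ℤ) * N).card := by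
    rw [Module.finrank_eq_card_basis b.toBasis, ← Finset.card_univ,
      ← Finset.card_filter_add_card_filter_not (fun i => tail n (c i) ∈ T)]
    congr 2
    ext i
    simp [hT, GoodT]
  refine ⟨_, ?_, ?_, card_bad_le hG n⟩
  · rw [hd]; exact Nat.le_add_left _ _
  · rw [hd, Nat.add_sub_cancel]
    exact card_tail_sq_le h hG hn T

end

/-! ### Unitarization and passage to simple objects -/

section groups
variable {G : Type} [Group G] [Fintype G]

/-- Weyl's unitarian trick, realised inside `G → ℂ^d`. -/
lemma exists_unitary {V : Type} [AddCommGroup V] [Module ℂ V] [FiniteDimensional ℂ V]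
    (ρ : Representation ℂ G V) :
    ∃ (V' : Type) (_ : NormedAddCommGroup V') (_ : InnerProductSpace ℂ V')
      (_ : FiniteDimensional ℂ V') (ρ' : Representation ℂ G V') (e : V ≃ₗ[ℂ] V'),
      (∀ g u v, inner ℂ (ρ' g u) (ρ' g v) = inner ℂ u v) ∧ ∀ g, ρ' g = e.conj (ρ g) := by
  let d := Module.finrank ℂ V
  let f : V ≃ₗ[ℂ] EuclideanSpace ℂ (Fin d) :=
    LinearEquiv.ofFinrankEq _ _ (by rw [finrank_euclideanSpace_fin])
  let E := PiLp 2 (fun _ : G => EuclideanSpace ℂ (Fin d))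
  let Φ : V →ₗ[ℂ] E :=
    { toFun := fun v => WithLp.toLp 2 fun g => f (ρ g v)
      map_add' := fun u v => by
        ext g : 1
        simp only [map_add]
        rfl
      map_smul' := fun r v => by
        ext g : 1
        simp only [map_smul, RingHom.id_apply]
        rfl }
  have hΦ : Function.Injective Φ := by
    intro u v huv
    have h1 : f (ρ 1 u) = f (ρ 1 v) := congrFun (congrArg WithLp.ofLp huv) 1
    simpa using h1
  let e : V ≃ₗ[ℂ] LinearMap.range Φ := LinearEquiv.ofInjective Φ hΦ
  let ρ' : Representation ℂ G (LinearMap.range Φ) :=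
    { toFun := fun g => e.conj (ρ g)
      map_one' := by rw [map_one]; exact LinearEquiv.conj_id e
      map_mul' := fun g h => by
        rw [map_mul]; exact LinearEquiv.conj_comp e _ _ }
  refine ⟨LinearMap.range Φ, inferInstance, inferInstance, inferInstance, ρ', e, ?_, fun g => rfl⟩
  intro g u v
  obtain ⟨u, rfl⟩ := e.surjective u
  obtain ⟨v, rfl⟩ := e.surjective v
  have h1 : ∀ w, ρ' g (e w) = e (ρ g w) := fun w => by
    change e (ρ g (e.symm (e w))) = _
    rw [e.symm_apply_apply]
  have h2 : ∀ w, ((e w : LinearMap.range Φ) : E) = Φ w := fun w => rfl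
  rw [h1, h1, Submodule.coe_inner, Submodule.coe_inner, h2, h2, h2, h2, PiLp.inner_apply,
    PiLp.inner_apply]
  refine Fintype.sum_equiv (Equiv.mulRight g) _ _ fun x => ?_
  change inner ℂ (f (ρ x (ρ g u))) (f (ρ x (ρ g v))) = inner ℂ (f (ρ (x * g) u)) (f (ρ (x * g) v))
  rw [map_mul]; rfl

lemma card_ne_zero : (Nat.card G : ℂ) ≠ 0 := by exact_mod_cast Nat.card_pos.ne'

/-- The representation carried by an object of `FDRep`, as a term of `Representation`. -/
noncomputable abbrev rep (X : FDRep ℂ G) : Representation ℂ G X := X.ρ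

/-- Simplicity in `FDRep` amounts to a one-dimensional space of self-intertwiners. -/
lemma simple_iff_finrank (X : FDRep ℂ G) :
    Simple X ↔ Module.finrank ℂ ((rep X).IntertwiningMap (rep X)) = 1 := by
  have : Invertible (Nat.card G : ℂ) := invertibleOfNonzero card_ne_zero
  rw [FDRep.simple_iff_char_is_norm_one]
  have h1 := Representation.card_inv_mul_sum_char_mul_char_eq_finrank (rep X) (rep X)
  have h2 : ∀ g, (rep X).character g = X.character g := fun g => rfl
  simp only [h2] at h1
  rw [← Nat.cast_inj (R := ℂ), ← h1, Nat.cast_one, inv_mul_eq_one₀ card_ne_zero, eq_comm]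

lemma finrank_congr_char {V V' : Type} [AddCommGroup V] [Module ℂ V] [FiniteDimensional ℂ V]
    [AddCommGroup V'] [Module ℂ V'] [FiniteDimensional ℂ V']
    (ρ : Representation ℂ G V) (ρ' : Representation ℂ G V') (h : ρ.character = ρ'.character) :
    Module.finrank ℂ (ρ.IntertwiningMap ρ) = Module.finrank ℂ (ρ'.IntertwiningMap ρ') := by
  have : Invertible (Nat.card G : ℂ) := invertibleOfNonzero card_ne_zero
  rw [← Nat.cast_inj (R := ℂ), ← Representation.card_inv_mul_sum_char_mul_char_eq_finrank,
    ← Representation.card_inv_mul_sum_char_mul_char_eq_finrank, h]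

end groups

/-- If the only self-intertwiners are multiples of one operator, they are scalars. -/
lemma scalar_of_finrank_one {G V : Type} [Group G] [AddCommGroup V] [Module ℂ V] [FiniteDimensional ℂ V]
    {ρ : Representation ℂ G V} (h : Module.finrank ℂ (ρ.IntertwiningMap ρ) = 1)
    (T : V →ₗ[ℂ] V) (hT : ∀ g v, T (ρ g v) = ρ g (T v)) : ∃ r : ℂ, ∀ v, T v = r • v := by
  have hid : Representation.IntertwiningMap.id ρ ≠ 0 := by
    intro h0
    have hall : ∀ φ : ρ.IntertwiningMap ρ, φ = 0 := by
      intro φ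
      apply Representation.IntertwiningMap.ext
      ext v
      have : v = 0 := congrArg (fun ψ : ρ.IntertwiningMap ρ => ψ v) h0
      change φ v = 0
      rw [this, map_zero]
    have : Subsingleton (ρ.IntertwiningMap ρ) := ⟨fun a b => by rw [hall a, hall b]⟩
    rw [Module.finrank_zero_of_subsingleton] at h
    exact absurd h (by norm_num)
  obtain ⟨r, hr⟩ := (finrank_eq_one_iff_of_nonzero' _ hid).mp h
    ⟨T, fun g => LinearMap.ext fun v => hT g v⟩
  exact ⟨r, fun v => (congrArg (fun ψ : ρ.IntertwiningMap ρ => ψ v) hr).symm⟩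

section perm
variable {N : ℕ} {V : Type} [NormedAddCommGroup V] [InnerProductSpace ℂ V] [FiniteDimensional ℂ V]

/-- A unitary representation with scalar self-intertwiners is irreducible, because the orthogonal
projection to an invariant subspace is a self-intertwiner. -/
lemma uirrep_of_finrank {ρ : Representation ℂ (Perm (Fin N)) V}
    (hU : ∀ g u v, inner ℂ (ρ g u) (ρ g v) = inner ℂ u v)
    (h : Module.finrank ℂ (ρ.IntertwiningMap ρ) = 1) : UIrrep ρ := by
  refine ⟨hU, fun W hW => ?_⟩
  obtain ⟨r, hr⟩ := scalar_of_finrank_one h (W.starProjection : V →ₗ[ℂ] V)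
    (fun g v => proj_comm W (ρ g) (ρ g⁻¹) (inner_map_left hU g) (hW g) (hW g⁻¹) v)
  by_cases h0 : r = 0
  · left
    rw [eq_bot_iff]
    intro w hw
    have h1 : W.starProjection w = r • w := hr w
    rw [Submodule.starProjection_eq_self_iff.mpr hw, h0, zero_smul] at h1
    simpa using h1
  · right
    rw [eq_top_iff]
    intro v _
    have h1 : W.starProjection v = r • v := hr v
    have h2 : v = r⁻¹ • W.starProjection v := by rw [h1, smul_smul, inv_mul_cancel₀ h0, one_smul]
    rw [h2]
    exact Submodule.smul_mem _ _ (W.starProjection_apply_mem v)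

end perm

/-- The representation-theoretic input: outside `bad` dimensions, a simple object has dimension at
most `√(n! (N-n)! #T)`, and `bad` is controlled by the character on products of 3-cycles. -/
lemma simple_bound {N n : ℕ} (hn : n ≤ N) (X : FDRep ℂ (Perm (Fin N))) (hX : Simple X)
    (T : Finset (Tl N n → ℤ)) (hT : ∀ t, t ∈ T ↔ t ∈ GoodT N n) :
    ∃ bad : ℕ, bad ≤ Module.finrank ℂ X ∧
      (Module.finrank ℂ X - bad) ^ 2 ≤ n.factorial * (T.card * (N - n).factorial) ∧
      (((N - n : ℕ) : ℝ) * N) ^ 2 * bad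
        ≤ (∑ x ∈ Ps N n ×ˢ Ps N n, X.character (gp x.1 * gp x.2)).re := by
  obtain ⟨V, _, _, _, ρ, e, hU, hρ⟩ := exists_unitary (rep X)
  have hch : ∀ g, LinearMap.trace ℂ V (ρ g) = X.character g := fun g => by
    rw [hρ, LinearMap.trace_conj']; rfl
  have h1 : Module.finrank ℂ (ρ.IntertwiningMap ρ) = 1 := by
    rw [finrank_congr_char ρ (rep X) (funext hch)]
    exact (simple_iff_finrank X).mp hX
  have h2 := structure_bound (uirrep_of_finrank hU h1) hn T hT
  rw [← e.finrank_eq] at h2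
  simp only [hch] at h2
  exact h2

/-! ### Column orthogonality and the Plancherel identity -/

section schur
variable {G : Type} [Group G]

/-- Schur's lemma in the form: a representation without invariant subspaces has a one-dimensional
space of self-intertwiners. -/
lemma finrank_one_of_irred {V : Type} [AddCommGroup V] [Module ℂ V] [FiniteDimensional ℂ V]
    [Nontrivial V] (ρ : Representation ℂ G V)
    (h : ∀ W : Submodule ℂ V, (∀ g, ∀ w ∈ W, ρ g w ∈ W) → W = ⊥ ∨ W = ⊤) :
    Module.finrank ℂ (ρ.IntertwiningMap ρ) = 1 := by
  have hid : Representation.IntertwiningMap.id ρ ≠ 0 := by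
    intro h0
    obtain ⟨v, hv⟩ := exists_ne (0 : V)
    exact hv (congrArg (fun ψ : ρ.IntertwiningMap ρ => ψ v) h0)
  rw [finrank_eq_one_iff_of_nonzero' _ hid]
  intro φ
  obtain ⟨r, hr⟩ := Module.End.exists_eigenvalue φ.toLinearMap
  refine ⟨r, ?_⟩
  have hmem : ∀ v, v ∈ Module.End.eigenspace φ.toLinearMap r ↔ φ.toLinearMap v = r • v :=
    fun v => Module.End.mem_eigenspace_iff
  rcases h (Module.End.eigenspace φ.toLinearMap r) (fun g w hw => by
    rw [hmem] at hw ⊢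
    have h1 : φ.toLinearMap (ρ g w) = ρ g (φ.toLinearMap w) :=
      LinearMap.congr_fun (φ.isIntertwining' g) w
    rw [h1, hw, map_smul]) with h1 | h1
  · exact absurd h1 hr
  · apply Representation.IntertwiningMap.ext
    ext v
    have : v ∈ Module.End.eigenspace φ.toLinearMap r := h1 ▸ Submodule.mem_top
    exact ((hmem v).mp this).symm

end schur

section average
variable {G : Type} [Group G] [Fintype G]

/-- A class function orthogonal to all irreducible characters acts by zero in every unitary
representation: on a minimal invariant subspace of the orthogonal complement of its kernel it
would be a scalar of trace zero. -/
lemma average_eq_zero {f : G → ℂ} (hf : ∀ g h, f (h * g * h⁻¹) = f g)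
    (horth : ∀ X : FDRep ℂ G, Simple X → ∑ g, f g * X.character g = 0)
    {V : Type} [NormedAddCommGroup V] [InnerProductSpace ℂ V] [FiniteDimensional ℂ V]
    (ρ : Representation ℂ G V) (hU : ∀ g u v, inner ℂ (ρ g u) (ρ g v) = inner ℂ u v) :
    ∑ g, f g • ρ g = 0 := by
  set T : V →ₗ[ℂ] V := ∑ g, f g • ρ g with hT
  have hTv : ∀ v, T v = ∑ g, f g • ρ g v := fun v => by
    rw [hT, LinearMap.sum_apply]; rfl
  have hcomm : ∀ h v, T (ρ h v) = ρ h (T v) := by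
    intro h v
    rw [hTv, hTv, map_sum]
    refine Fintype.sum_equiv (MulAut.conj h⁻¹).toEquiv _ _ fun g => ?_
    change f g • ρ g (ρ h v) = ρ h (f (h⁻¹ * g * h⁻¹⁻¹) • ρ (h⁻¹ * g * h⁻¹⁻¹) v)
    rw [hf, map_smul, ← Module.End.mul_apply, ← Module.End.mul_apply, ← map_mul, ← map_mul]
    congr 3
    group
  have hKinv : ∀ g, ∀ v ∈ (LinearMap.ker T)ᗮ, ρ g v ∈ (LinearMap.ker T)ᗮ := by
    intro g v hv
    rw [Submodule.mem_orthogonal] at hv ⊢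
    intro u hu
    have h1 := hU g⁻¹ u (ρ g v)
    rw [← Module.End.mul_apply (ρ g⁻¹), ← map_mul, inv_mul_cancel, map_one] at h1
    rw [← h1]
    refine hv _ ?_
    rw [LinearMap.mem_ker] at hu ⊢
    rw [hcomm, hu, map_zero]
  by_contra hne
  have hK : (LinearMap.ker T)ᗮ ≠ ⊥ := by
    rw [Ne, Submodule.orthogonal_eq_bot_iff, LinearMap.ker_eq_top]
    exact hne
  obtain ⟨W, ⟨hWK, hWinv, hW0⟩, hmin⟩ := WellFounded.has_min
    (wellFounded_lt (α := Submodule ℂ V))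
    {W | W ≤ (LinearMap.ker T)ᗮ ∧ (∀ g, ∀ w ∈ W, ρ g w ∈ W) ∧ W ≠ ⊥} ⟨_, le_rfl, hKinv, hK⟩
  have : Nontrivial W := (Submodule.nontrivial_iff_ne_bot).mpr hW0
  let σ : Representation ℂ G W :=
    { toFun := fun g => (ρ g).restrict (hWinv g)
      map_one' := by ext w; simp
      map_mul' := fun g h => by ext w; simp }
  have hσ : ∀ g w, ((σ g w : W) : V) = ρ g w := fun g w => rfl
  have h1 : Module.finrank ℂ (σ.IntertwiningMap σ) = 1 := by
    refine finrank_one_of_irred σ fun Y hY => ?_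
    by_cases hY0 : Y = ⊥
    · exact Or.inl hY0
    right
    by_contra hYt
    refine hmin (Y.map W.subtype) ⟨(Submodule.map_subtype_le W Y).trans hWK, ?_, ?_⟩ ?_
    · rintro g _ ⟨w, hw, rfl⟩
      exact ⟨σ g w, hY g w hw, rfl⟩
    · rw [Ne, (Submodule.map_injective_of_injective W.injective_subtype).eq_iff' (Submodule.map_bot _)]
      exact hY0
    · refine lt_of_le_of_ne (Submodule.map_subtype_le W Y) fun h => hYt ?_
      rw [eq_top_iff]
      intro w _
      have hle : W ≤ Y.map W.subtype := h.ge
      obtain ⟨w', hw', hww⟩ := hle w.2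
      exact (Subtype.ext hww : w' = w) ▸ hw'
  have hS : Simple (FDRep.of σ) := (simple_iff_finrank _).mpr h1
  let TW : W →ₗ[ℂ] W := ∑ g, f g • σ g
  have hTW : ∀ w, ((TW w : W) : V) = T w := by
    intro w
    change W.subtype (TW w) = _
    rw [hTv, LinearMap.sum_apply, map_sum]; rfl
  obtain ⟨r, hr⟩ := scalar_of_finrank_one h1 TW (fun g v => Subtype.ext (by
    rw [hTW, hσ, hσ, hTW, hcomm]))
  have htr : LinearMap.trace ℂ W TW = 0 := by
    rw [map_sum, ← horth _ hS]
    refine Finset.sum_congr rfl fun g _ => ?_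
    rw [map_smul]; rfl
  have hTWr : TW = r • LinearMap.id := LinearMap.ext fun w => hr w
  rw [hTWr, map_smul, LinearMap.trace_id, smul_eq_mul, mul_eq_zero] at htr
  have hr0 : r = 0 := htr.resolve_right (by
    exact_mod_cast (Module.finrank_pos (R := ℂ) (M := W)).ne')
  obtain ⟨w, hw⟩ := exists_ne (0 : W)
  have hwker : (w : V) ∈ LinearMap.ker T := by
    rw [LinearMap.mem_ker, ← hTW, hr, hr0, zero_smul]; rfl
  have h2 : inner ℂ (w : V) (w : V) = 0 := (Submodule.mem_orthogonal _ _).mp (hWK w.2) _ hwker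
  exact hw (Subtype.ext (inner_self_eq_zero.mp h2))

/-- The irreducible characters separate class functions: apply `average_eq_zero` to the right regular
representation (made unitary) and evaluate at a delta function. -/
lemma classfun_eq_zero {f : G → ℂ} (hf : ∀ g h, f (h * g * h⁻¹) = f g)
    (horth : ∀ X : FDRep ℂ G, Simple X → ∑ g, f g * X.character g = 0) (g₀ : G) : f g₀ = 0 := by
  let ρ : Representation ℂ G (G → ℂ) :=
    { toFun := fun g => LinearMap.funLeft ℂ ℂ (fun x => x * g)
      map_one' := by ext φ x; simp [LinearMap.funLeft]
      map_mul' := fun g h => by ext φ x; simp [LinearMap.funLeft, mul_assoc] }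
  obtain ⟨V', _, _, _, ρ', e, hU, hρ⟩ := exists_unitary ρ
  have h0 := average_eq_zero hf horth ρ' hU
  let φ : G → ℂ := Pi.single g₀ 1
  have h1 := LinearMap.congr_fun h0 (e φ)
  have h2 : ∀ g, ρ' g (e φ) = e (ρ g φ) := fun g => by
    rw [hρ, LinearEquiv.conj_apply_apply, e.symm_apply_apply]
  rw [LinearMap.sum_apply] at h1
  simp only [LinearMap.smul_apply, h2, ← map_smul, ← map_sum, LinearMap.zero_apply] at h1
  have h3 := congrFun (e.map_eq_zero_iff.mp h1) 1
  have h4 : ∀ g, ρ g φ 1 = φ g := fun g => by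
    change φ (1 * g) = φ g
    rw [one_mul]
  simpa [h4, φ, Pi.single_apply] using h3

variable {I : Type} {U : I → FDRep ℂ G}

/-- Row orthogonality of the irreducible characters. -/
lemma char_orth (hs : ∀ i, Simple (U i)) (hinj : ∀ i j, Nonempty (U i ≅ U j) → i = j) (i j : I) :
    ∑ g, (U i).character g * (U j).character g⁻¹ = if i = j then (Nat.card G : ℂ) else 0 := by
  have : Invertible (Nat.card G : ℂ) := invertibleOfNonzero card_ne_zero
  have := hs i
  have := hs j
  have h := FDRep.char_orthonormal (U i) (U j)
  have hiff : Nonempty (U i ≅ U j) ↔ i = j := ⟨hinj i j, fun h => h ▸ ⟨Iso.refl _⟩⟩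
  rw [inv_mul_eq_iff_eq_mul₀ card_ne_zero] at h
  rw [h, if_congr hiff rfl rfl]
  split_ifs <;> simp

variable [Fintype I]

/-- Column orthogonality against the identity: the character of the regular representation. -/
lemma plancherel_char (hs : ∀ i, Simple (U i)) (hinj : ∀ i j, Nonempty (U i ≅ U j) → i = j)
    (hcomp : ∀ X : FDRep ℂ G, Simple X → ∃ i, Nonempty (X ≅ U i)) (g : G) :
    ∑ i, (Module.finrank ℂ (U i) : ℂ) * (U i).character g
      = if g = 1 then (Nat.card G : ℂ) else 0 := by
  have key := classfun_eq_zero (G := G)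
    (f := fun g => ∑ i, (Module.finrank ℂ (U i) : ℂ) * (U i).character g⁻¹
      - if g = 1 then (Nat.card G : ℂ) else 0) ?_ ?_ g⁻¹
  · simpa [sub_eq_zero] using key
  · intro g h
    have h1 : h * g * h⁻¹ = 1 ↔ g = 1 := by
      constructor
      · intro h'
        have : g = h⁻¹ * (h * g * h⁻¹) * h := by group
        rw [this, h']; group
      · rintro rfl; group
    have h2 : (h * g * h⁻¹)⁻¹ = h * g⁻¹ * h⁻¹ := by group
    simp only [h1, h2, FDRep.char_conj]
  · intro X hX
    obtain ⟨j, ⟨φ⟩⟩ := hcomp X hX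
    rw [FDRep.char_iso φ]
    simp only [sub_mul, Finset.sum_sub_distrib, Finset.sum_mul, ite_mul, zero_mul,
      Finset.sum_ite_eq', Finset.mem_univ, if_true, FDRep.char_one]
    rw [Finset.sum_comm]
    have h1 : ∀ i, ∑ g, (Module.finrank ℂ (U i) : ℂ) * (U i).character g⁻¹ * (U j).character g
        = Module.finrank ℂ (U i) * if j = i then (Nat.card G : ℂ) else 0 := by
      intro i
      rw [← char_orth hs hinj j i, Finset.mul_sum]
      exact Finset.sum_congr rfl fun g _ => by ring
    simp only [h1, mul_ite, mul_zero, Finset.sum_ite_eq, Finset.mem_univ, if_true]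
    ring

/-- `∑ d_i² = |G|`, the total mass of the Plancherel measure. -/
lemma plancherel_total (hs : ∀ i, Simple (U i)) (hinj : ∀ i j, Nonempty (U i ≅ U j) → i = j)
    (hcomp : ∀ X : FDRep ℂ G, Simple X → ∃ i, Nonempty (X ≅ U i)) :
    ∑ i, Module.finrank ℂ (U i) ^ 2 = Nat.card G := by
  have h := plancherel_char hs hinj hcomp 1
  simp only [FDRep.char_one, if_true] at h
  rw [← Nat.cast_inj (R := ℂ), ← h]
  push_cast
  exact Finset.sum_congr rfl fun i _ => by ring

/-- There are at most as many irreducibles as conjugacy classes. -/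
lemma card_le_conjClasses (hs : ∀ i, Simple (U i))
    (hinj : ∀ i j, Nonempty (U i ≅ U j) → i = j) :
    Fintype.card I ≤ Nat.card (ConjClasses G) := by
  have hcl : ∀ i g h, IsConj g h → (U i).character g = (U i).character h := by
    intro i g h hgh
    obtain ⟨c, rfl⟩ := isConj_iff.mp hgh
    rw [FDRep.char_conj]
  let F : I → ConjClasses G → ℂ := fun i => Quotient.lift (U i).character (hcl i)
  have hF : ∀ i g, F i (ConjClasses.mk g) = (U i).character g := fun i g => rfl
  have hli : LinearIndependent ℂ F := by
    rw [Fintype.linearIndependent_iff]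
    intro a ha j
    have h1 : ∑ g, (∑ i, a i * (U i).character g) * (U j).character g⁻¹ = 0 := by
      refine Finset.sum_eq_zero fun g _ => ?_
      have := congrFun ha (ConjClasses.mk g)
      simp only [Finset.sum_apply, Pi.smul_apply, hF, smul_eq_mul, Pi.zero_apply] at this
      rw [this, zero_mul]
    simp only [Finset.sum_mul] at h1
    rw [Finset.sum_comm] at h1
    simp only [mul_assoc, ← Finset.mul_sum, char_orth hs hinj, mul_ite, mul_zero,
      Finset.sum_ite_eq', Finset.mem_univ, if_true] at h1
    exact (mul_eq_zero.mp h1).resolve_right card_ne_zero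
  have := hli.fintype_card_le_finrank
  rwa [Module.finrank_fintype_fun_eq_card, ← Nat.card_eq_fintype_card (α := ConjClasses G)] at this

end average

/-! ### Averaging over the Plancherel measure -/

/-- Averaging `simple_bound` against the Plancherel measure: the representations whose dimension
exceeds the structural bound have Plancherel mass at most `2 / (N - n)`. -/
lemma large_mass {N n : ℕ} (hn : n < N) {I : Type} [Fintype I]
    {U : I → FDRep ℂ (Perm (Fin N))} (hs : ∀ i, Simple (U i))
    (hinj : ∀ i j, Nonempty (U i ≅ U j) → i = j)
    (hcomp : ∀ X : FDRep ℂ (Perm (Fin N)), Simple X → ∃ i, Nonempty (X ≅ U i))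
    (T : Finset (Tl N n → ℤ)) (hT : ∀ t, t ∈ T ↔ t ∈ GoodT N n) :
    (∑ i ∈ Finset.univ.filter (fun i =>
        4 * (n.factorial * (T.card * (N - n).factorial)) < Module.finrank ℂ (U i) ^ 2),
      (Module.finrank ℂ (U i) : ℝ) ^ 2) * (N - n : ℕ) ≤ 2 * N.factorial := by
  choose bad hbd hsq hchar using fun i => simple_bound hn.le (U i) (hs i) T hT
  set k := N - n with hk
  have hkpos : 0 < k := by omega
  have hcard : Nat.card (Perm (Fin N)) = N.factorial := by
    rw [Nat.card_eq_fintype_card, Fintype.card_perm, Fintype.card_fin]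
  have hsum : ∑ i, (Module.finrank ℂ (U i) : ℂ) *
      ∑ x ∈ Ps N n ×ˢ Ps N n, (U i).character (gp x.1 * gp x.2)
      = (((N.factorial * ((Ps N n ×ˢ Ps N n).filter fun x => gp x.1 * gp x.2 = 1).card : ℕ) : ℝ)
        : ℂ) := by
    simp only [Finset.mul_sum]
    rw [Finset.sum_comm]
    simp only [plancherel_char hs hinj hcomp]
    rw [Finset.card_filter, hcard]
    push_cast
    rw [Finset.mul_sum]
    refine Finset.sum_congr rfl fun x _ => ?_
    by_cases h : gp x.1 * gp x.2 = 1 <;> simp [h]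
  have hre := congrArg Complex.re hsum
  rw [Complex.ofReal_re, Complex.re_sum] at hre
  have hterm : ∀ i, ((Module.finrank ℂ (U i) : ℂ) *
      ∑ x ∈ Ps N n ×ˢ Ps N n, (U i).character (gp x.1 * gp x.2)).re
      = (Module.finrank ℂ (U i) : ℝ) *
        (∑ x ∈ Ps N n ×ˢ Ps N n, (U i).character (gp x.1 * gp x.2)).re := fun i => by
    rw [← Complex.ofReal_natCast, Complex.re_ofReal_mul]
  simp only [hterm] at hre
  have h1 : ((k : ℝ) * N) ^ 2 * ∑ i, (Module.finrank ℂ (U i) : ℝ) * bad i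
      ≤ N.factorial * (k * N ^ 2) := by
    calc _ = ∑ i, (Module.finrank ℂ (U i) : ℝ) * (((k : ℝ) * N) ^ 2 * bad i) := by
          rw [Finset.mul_sum]; exact Finset.sum_congr rfl fun i _ => by ring
      _ ≤ ∑ i, (Module.finrank ℂ (U i) : ℝ) *
          (∑ x ∈ Ps N n ×ˢ Ps N n, (U i).character (gp x.1 * gp x.2)).re :=
          Finset.sum_le_sum fun i _ => mul_le_mul_of_nonneg_left (hchar i) (Nat.cast_nonneg _)
      _ ≤ _ := by
          rw [hre]
          exact_mod_cast Nat.mul_le_mul_left _ (card_pairs_le N n)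
  have hN : (0 : ℝ) < N := by exact_mod_cast (by omega : 0 < N)
  have hk' : (0 : ℝ) < k := by exact_mod_cast hkpos
  have h2 : (∑ i, (Module.finrank ℂ (U i) : ℝ) * bad i) * k ≤ N.factorial := by
    have h3 : (k * (N : ℝ) ^ 2) * ((∑ i, (Module.finrank ℂ (U i) : ℝ) * bad i) * k)
        ≤ (k * (N : ℝ) ^ 2) * N.factorial := by nlinarith [h1]
    exact le_of_mul_le_mul_left h3 (by positivity)
  have h4 : ∑ i ∈ Finset.univ.filter (fun i =>
        4 * (n.factorial * (T.card * k.factorial)) < Module.finrank ℂ (U i) ^ 2),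
      (Module.finrank ℂ (U i) : ℝ) ^ 2 ≤ 2 * ∑ i, (Module.finrank ℂ (U i) : ℝ) * bad i := by
    rw [Finset.mul_sum]
    refine (Finset.sum_le_sum fun i hi => ?_).trans
      (Finset.sum_le_sum_of_subset_of_nonneg (Finset.subset_univ _) fun i _ _ => by positivity)
    rw [Finset.mem_filter] at hi
    -- if `2 * bad i < d` then `d² < 4 (d - bad i)²`, which is at most the threshold
    have h5 : Module.finrank ℂ (U i) ≤ 2 * bad i := by
      by_contra hlt
      obtain ⟨c, hc⟩ := Nat.exists_eq_add_of_le (hbd i)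
      have h6 := hsq i
      rw [hc, Nat.add_sub_cancel_left] at h6
      have h7 := hi.2
      rw [hc] at h7 hlt
      nlinarith [h6, h7]
    have h8 : (Module.finrank ℂ (U i) : ℝ) ≤ 2 * bad i := by exact_mod_cast h5
    nlinarith [h8, Nat.cast_nonneg (α := ℝ) (Module.finrank ℂ (U i))]
  nlinarith [h2, h4]

/-! ### Lattice points and factorials -/

lemma inv_one_sub_exp_le {u : ℝ} (hu : 0 < u) : (1 - Real.exp (-u))⁻¹ ≤ 1 + 1 / u := by
  have h1 : Real.exp (-u) ≤ (1 + u)⁻¹ := by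
    rw [Real.exp_neg]
    exact inv_anti₀ (by linarith) (by linarith [Real.add_one_le_exp u])
  have h2 : u / (1 + u) ≤ 1 - Real.exp (-u) := by
    have : u / (1 + u) = 1 - (1 + u)⁻¹ := by field_simp; ring
    linarith
  calc (1 - Real.exp (-u))⁻¹ ≤ (u / (1 + u))⁻¹ := inv_anti₀ (by positivity) h2
    _ = 1 + 1 / u := by field_simp; ring

/-- The geometric series with ratio `e^{-1/s}` has sum at most `1 + s`. -/
lemma geom_le {s : ℝ} (hs : 0 < s) (m : ℕ) :
    ∑ j ∈ Finset.range m, Real.exp (-(j : ℝ) / s) ≤ 1 + s := by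
  have hr : Real.exp (-(1 / s)) < 1 := by rw [Real.exp_lt_one_iff]; simpa using hs
  have h1 : ∀ j : ℕ, Real.exp (-(j : ℝ) / s) = Real.exp (-(1 / s)) ^ j := fun j => by
    rw [← Real.exp_nat_mul]; congr 1; ring
  simp only [h1]
  have h2 := (summable_geometric_of_lt_one (Real.exp_pos _).le hr).sum_le_tsum
    (Finset.range m) (fun _ _ => by positivity)
  rw [tsum_geometric_of_lt_one (Real.exp_pos _).le hr] at h2
  have h3 := inv_one_sub_exp_le (u := 1 / s) (by positivity)
  rw [one_div_one_div] at h3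
  exact h2.trans h3

/-- The total weight of an integer under `e^{-|x|/s}`: two geometric series. -/
lemma int_weight_le {s : ℝ} (hs : 0 < s) (M : ℕ) :
    ∑ x ∈ Finset.Icc (-(M : ℤ)) M, Real.exp (-|(x : ℝ)| / s) ≤ 2 * (1 + s) := by
  have hsub : Finset.Icc (-(M : ℤ)) M ⊆ (Finset.range (M + 1)).image (fun m : ℕ => (m : ℤ))
      ∪ (Finset.range (M + 1)).image (fun m : ℕ => -(m : ℤ)) := by
    intro x hx
    rw [Finset.mem_Icc] at hx
    simp only [Finset.mem_union, Finset.mem_image, Finset.mem_range]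
    rcases le_total 0 x with h | h
    · exact Or.inl ⟨x.toNat, by omega, by omega⟩
    · exact Or.inr ⟨(-x).toNat, by omega, by omega⟩
  refine (Finset.sum_le_sum_of_subset_of_nonneg hsub fun _ _ _ => by positivity).trans ?_
  have h1 := Finset.sum_union_inter (s₁ := (Finset.range (M + 1)).image (fun m : ℕ => (m : ℤ)))
    (s₂ := (Finset.range (M + 1)).image (fun m : ℕ => -(m : ℤ)))
    (f := fun x : ℤ => Real.exp (-|(x : ℝ)| / s))
  rw [Finset.sum_image (fun a _ b _ h => by simpa using h),
    Finset.sum_image (fun a _ b _ h => by simpa using h)] at h1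
  simp only [Int.cast_neg, Int.cast_natCast, abs_neg, Nat.abs_cast] at h1
  have h2 := geom_le hs (M + 1)
  have h3 : 0 ≤ ∑ x ∈ (Finset.range (M + 1)).image (fun m : ℕ => (m : ℤ)) ∩
    (Finset.range (M + 1)).image (fun m : ℕ => -(m : ℤ)), Real.exp (-|(x : ℝ)| / s) :=
    Finset.sum_nonneg fun _ _ => by positivity
  linarith

/-- The number of lattice points in a ball, by exponential weights: a point of `GoodT` has
`ℓ¹`-norm at most `3/2 (N - n) √N`. -/
lemma goodT_card {N n : ℕ} (hN : 1 ≤ N) :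
    ∃ T : Finset (Tl N n → ℤ), (∀ t, t ∈ T ↔ t ∈ GoodT N n) ∧
      (T.card : ℝ) ≤ (20 * Real.sqrt N) ^ (N - n) := by
  set k := N - n with hk
  set s := Real.sqrt N with hs
  have hs1 : 1 ≤ s := by rw [hs, Real.one_le_sqrt]; exact_mod_cast hN
  have hs0 : 0 < s := by linarith
  have hss : s * s = N := Real.mul_self_sqrt (Nat.cast_nonneg _)
  let M : ℕ := 2 * k * N
  let P : Finset (Tl N n → ℤ) := Fintype.piFinset fun _ => Finset.Icc (-(M : ℤ)) M
  have hmem : ∀ t, t ∈ GoodT N n ↔ ∑ j, t j ^ 2 ≤ 2 * (k : ℤ) * N := fun t => Iff.rfl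
  refine ⟨P.filter fun t => ∑ j, t j ^ 2 ≤ 2 * (k : ℤ) * N, fun t => ?_, ?_⟩
  · rw [Finset.mem_filter, hmem, and_iff_right_iff_imp]
    intro ht
    rw [Fintype.mem_piFinset]
    intro j
    have h1 : t j ^ 2 ≤ (M : ℤ) := by
      refine (Finset.single_le_sum (f := fun j => t j ^ 2) (fun _ _ => sq_nonneg _)
        (Finset.mem_univ j)).trans ?_
      simpa [M] using ht
    rw [Finset.mem_Icc]
    constructor <;> nlinarith [sq_nonneg (t j - 1), sq_nonneg (t j + 1), h1, sq_nonneg (t j), Int.natAbs_le_self_sq (t j), Int.natAbs_sq (t j)]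
  · have hpt : ∀ t ∈ P.filter fun t => ∑ j, t j ^ 2 ≤ 2 * (k : ℤ) * N,
        (1 : ℝ) ≤ Real.exp (3 / 2) ^ k * ∏ j, Real.exp (-|(t j : ℝ)| / s) := by
      intro t ht
      rw [Finset.mem_filter] at ht
      have h0 : ∑ j, (t j : ℝ) ^ 2 ≤ 2 * k * N := by exact_mod_cast ht.2
      -- `|x| / s ≤ x² / (2 s²) + 1 / 2`
      have h1 : ∑ j, |(t j : ℝ)| / s ≤ ∑ j, ((t j : ℝ) ^ 2 / (2 * N) + 1 / 2) := by
        refine Finset.sum_le_sum fun j _ => ?_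
        rw [← hss, ← sq_abs (t j : ℝ), div_add_div _ _ (by positivity) (by norm_num),
          div_le_div_iff₀ hs0 (by positivity)]
        nlinarith [mul_nonneg hs0.le (sq_nonneg (|(t j : ℝ)| - s))]
      rw [Finset.sum_add_distrib, ← Finset.sum_div, ← Finset.sum_div, Finset.sum_const, Finset.card_univ,
        card_Tl, nsmul_eq_mul, ← hk] at h1
      have h2 : (∑ j, (t j : ℝ) ^ 2) / (2 * N) ≤ k := by
        rw [div_le_iff₀ (by positivity)]; linarith
      rw [← Real.exp_sum, ← Real.exp_nat_mul, ← Real.exp_add]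
      rw [Real.one_le_exp_iff]
      have h3 : ∑ j, -|(t j : ℝ)| / s = -∑ j, |(t j : ℝ)| / s := by
        rw [← Finset.sum_neg_distrib]
        exact Finset.sum_congr rfl fun j _ => neg_div _ _
      rw [h3, ← Finset.sum_div]
      linarith
    have h5 : Real.exp (3 / 2) ≤ 5 := by
      have h6 : Real.exp (3 / 2) ^ 2 = Real.exp 1 ^ 3 := by
        rw [← Real.exp_nat_mul, ← Real.exp_nat_mul]; norm_num
      have h7 : Real.exp 1 ^ 3 ≤ 2.72 ^ 3 :=
        pow_le_pow_left₀ (Real.exp_pos _).le (by linarith [Real.exp_one_lt_d9]) 3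
      nlinarith [Real.exp_pos (3 / 2)]
    calc ((P.filter fun t => ∑ j, t j ^ 2 ≤ 2 * (k : ℤ) * N).card : ℝ)
        = ∑ t ∈ P.filter fun t => ∑ j, t j ^ 2 ≤ 2 * (k : ℤ) * N, (1 : ℝ) := by simp
      _ ≤ ∑ t ∈ P.filter fun t => ∑ j, t j ^ 2 ≤ 2 * (k : ℤ) * N,
          Real.exp (3 / 2) ^ k * ∏ j, Real.exp (-|(t j : ℝ)| / s) := Finset.sum_le_sum hpt
      _ ≤ ∑ t ∈ P, Real.exp (3 / 2) ^ k * ∏ j, Real.exp (-|(t j : ℝ)| / s) :=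
          Finset.sum_le_sum_of_subset_of_nonneg (Finset.filter_subset _ _)
            fun _ _ _ => by positivity
      _ = Real.exp (3 / 2) ^ k *
          (∑ x ∈ Finset.Icc (-(M : ℤ)) M, Real.exp (-|(x : ℝ)| / s)) ^ k := by
          rw [← Finset.mul_sum]
          congr 1
          rw [← Finset.prod_univ_sum (fun _ : Tl N n => Finset.Icc (-(M : ℤ)) M)
            (fun _ x => Real.exp (-|(x : ℝ)| / s)), Finset.prod_const, Finset.card_univ, card_Tl]
      _ ≤ 5 ^ k * (2 * (1 + s)) ^ k := by
          gcongr
          exact int_weight_le hs0 M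
      _ ≤ 5 ^ k * (4 * s) ^ k := by
          have h6 : 2 * (1 + s) ≤ 4 * s := by linarith
          gcongr
      _ = (20 * s) ^ k := by rw [← mul_pow]; ring

/-- The structural bound on the square of a dimension, compared with `N!`, for `N - n ≈ √N / 120`
removed points. -/
lemma bound_small {N : ℕ} (hN : 720 ≤ Real.sqrt N) {k : ℕ}
    (hk : k = ⌊Real.sqrt N / 120⌋₊) {t : ℕ} (ht : (t : ℝ) ≤ (20 * Real.sqrt N) ^ k) :
    k < N ∧ ((4 * ((N - k).factorial * (t * k.factorial)) : ℕ) : ℝ)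
      < Real.exp (-(Real.sqrt N / 240)) * N.factorial := by
  set s := Real.sqrt N with hs
  have hs0 : 0 < s := by linarith
  have hss : s * s = N := Real.mul_self_sqrt (Nat.cast_nonneg _)
  have hk1 : (k : ℝ) ≤ s / 120 := by rw [hk]; exact Nat.floor_le (by positivity)
  have hk2 : s / 120 < k + 1 := by rw [hk]; exact Nat.lt_floor_add_one _
  have hk3 : (2 * k : ℝ) ≤ N := by nlinarith
  have hk4 : 2 * k ≤ N := by exact_mod_cast hk3
  have hNpos : 0 < N := by
    rcases Nat.eq_zero_or_pos N with h | h
    · rw [h] at hss; norm_num at hss; linarith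
    · exact h
  refine ⟨by omega, ?_⟩
  have hfac : (((N - k).factorial : ℕ) : ℝ) * ((N : ℝ) / 2) ^ k ≤ N.factorial := by
    have h1 := Nat.factorial_mul_pow_sub_le_factorial (Nat.sub_le N k)
    rw [Nat.sub_sub_self (by omega)] at h1
    have h2 : ((N - k : ℕ) : ℝ) = N - k := by rw [Nat.cast_sub (by omega)]
    calc _ ≤ (((N - k).factorial : ℕ) : ℝ) * ((N - k : ℕ) : ℝ) ^ k := by
          gcongr
          rw [h2]; linarith
      _ ≤ _ := by exact_mod_cast h1
  have hkk : (k.factorial : ℝ) ≤ (k : ℝ) ^ k := by exact_mod_cast Nat.factorial_le_pow k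
  -- the denominator `120` makes `20 s k` at most `N / 6`, which is below `N / (2 e)`
  have he : (20 * s) * (k : ℝ) ≤ Real.exp (-1) * ((N : ℝ) / 2) := by
    have h1 : (1 / 3 : ℝ) ≤ Real.exp (-1) := by
      rw [Real.exp_neg, one_div]
      exact inv_anti₀ (Real.exp_pos _) (by linarith [Real.exp_one_lt_d9])
    calc (20 * s) * (k : ℝ) ≤ (20 * s) * (s / 120) := by gcongr
      _ = (1 / 3) * (N / 2) := by rw [← hss]; ring
      _ ≤ _ := by gcongr
  have hpow : (t : ℝ) * k.factorial ≤ Real.exp (-k) * ((N : ℝ) / 2) ^ k := by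
    calc (t : ℝ) * k.factorial ≤ (20 * s) ^ k * (k : ℝ) ^ k := by gcongr
      _ = ((20 * s) * k) ^ k := (mul_pow _ _ _).symm
      _ ≤ (Real.exp (-1) * ((N : ℝ) / 2)) ^ k := by gcongr
      _ = _ := by rw [mul_pow, ← Real.exp_nat_mul]; congr 2; ring
  have h4 : 4 * Real.exp (-(k : ℝ)) < Real.exp (-(s / 240)) := by
    have h5 : Real.exp (-(s / 240)) = Real.exp (k - s / 240) * Real.exp (-(k : ℝ)) := by
      rw [← Real.exp_add]; congr 1; ring
    rw [h5]
    have h6 : (4 : ℝ) < Real.exp (k - s / 240) := by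
      -- `k - s / 240 ≥ s / 240 - 1 ≥ 2`, by `s ≥ 720`
      have h7 : Real.exp 2 ≤ Real.exp (k - s / 240) := Real.exp_le_exp.mpr (by linarith)
      have h8 : Real.exp 2 = Real.exp 1 ^ 2 := by rw [← Real.exp_nat_mul]; norm_num
      nlinarith [Real.exp_one_gt_d9]
    gcongr
  have hf0 : (0 : ℝ) < N.factorial := by exact_mod_cast N.factorial_pos
  push_cast
  calc (4 : ℝ) * ((N - k).factorial * (t * k.factorial))
      ≤ 4 * ((N - k).factorial * (Real.exp (-k) * ((N : ℝ) / 2) ^ k)) := by gcongr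
    _ = 4 * Real.exp (-k) * ((N - k).factorial * ((N : ℝ) / 2) ^ k) := by ring
    _ ≤ 4 * Real.exp (-k) * N.factorial := by gcongr
    _ < _ := by gcongr

/-! ### Partition numbers and the number of irreducibles -/

/-- The number `ζ(2)`, for the bound `p(N) ≤ exp ((1 + ζ(2)) √N)` on the partition numbers. -/
noncomputable def Z : ℝ := ∑' n : ℕ, 1 / ((n : ℝ) + 1) ^ 2

lemma hasSum_Z : HasSum (fun n : ℕ => 1 / ((n : ℝ) + 1) ^ 2) Z := by
  have h : Summable (fun n : ℕ => 1 / (n : ℝ) ^ 2) :=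
    Real.summable_one_div_nat_pow.mpr one_lt_two
  have h1 := (summable_nat_add_iff 1).mpr h
  refine Summable.hasSum ?_
  simpa using h1

lemma Z_nonneg : 0 ≤ Z := tsum_nonneg fun _ => by positivity

/-- `-∑_{i ≤ N} log (1 - q^i) ≤ ζ(2) s` for `q = e^{-1/s}`, by expanding the logarithm and summing
over `i` first. -/
lemma log_prod_le {s : ℝ} (hs : 0 < s) (N : ℕ) :
    ∑ i ∈ Finset.range N, -Real.log (1 - Real.exp (-(((i : ℝ) + 1) / s))) ≤ Z * s := by
  have hx : ∀ i : ℕ, |Real.exp (-(((i : ℝ) + 1) / s))| < 1 := fun i => by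
    rw [abs_of_pos (Real.exp_pos _), Real.exp_lt_one_iff]
    have : 0 < ((i : ℝ) + 1) / s := by positivity
    linarith
  have h1 := hasSum_sum (s := Finset.range N)
    (fun i _ => Real.hasSum_pow_div_log_of_abs_lt_one (hx i))
  refine hasSum_le (fun n => ?_) h1 (hasSum_Z.mul_right s)
  rw [← Finset.sum_div]
  have hu : 0 < ((n : ℝ) + 1) / s := by positivity
  set r := Real.exp (-(((n : ℝ) + 1) / s)) with hr
  have hr1 : r < 1 := by rw [hr, Real.exp_lt_one_iff]; linarith
  have hr0 : 0 < r := Real.exp_pos _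
  have h2 : ∀ i : ℕ, Real.exp (-(((i : ℝ) + 1) / s)) ^ (n + 1) = r * r ^ i := fun i => by
    rw [← pow_succ', hr, ← Real.exp_nat_mul, ← Real.exp_nat_mul]
    congr 1; push_cast; ring
  simp only [h2]
  rw [← Finset.mul_sum]
  have h3 := (summable_geometric_of_lt_one hr0.le hr1).sum_le_tsum
    (Finset.range N) (fun _ _ => by positivity)
  rw [tsum_geometric_of_lt_one hr0.le hr1] at h3
  have h4 := inv_one_sub_exp_le hu
  rw [← hr, one_div_div] at h4
  have h5 : r * (1 - r)⁻¹ = (1 - r)⁻¹ - 1 := by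
    have : 1 - r ≠ 0 := by linarith
    field_simp; ring
  have h6 : r * ∑ i ∈ Finset.range N, r ^ i ≤ s / (n + 1) := by
    calc _ ≤ r * (1 - r)⁻¹ := by gcongr
      _ ≤ _ := by linarith
  calc _ ≤ (s / (n + 1)) / (n + 1) := by gcongr
    _ = _ := by field_simp

/-- There are at most `exp ((1 + ζ(2)) √N)` partitions of `N`. A partition is determined by the
multiplicities of its parts, and at `q = e^{-1/√N}` each partition of `N` has weight `q^N = e^{-√N}`
in the generating function `∏ (1 - q^i)⁻¹ ≤ e^{ζ(2) √N}`. -/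
lemma card_partition_le {N : ℕ} (hN : 1 ≤ N) :
    (Fintype.card (Nat.Partition N) : ℝ) ≤ Real.exp ((1 + Z) * Real.sqrt N) := by
  set s := Real.sqrt N with hs
  have hs0 : 0 < s := Real.sqrt_pos.mpr (by exact_mod_cast hN)
  have hss : s * s = N := Real.mul_self_sqrt (Nat.cast_nonneg _)
  let mult : Nat.Partition N → Fin N → ℕ := fun p i => p.parts.count (i.val + 1)
  have hinj : Function.Injective mult := by
    intro p p' h
    apply Nat.Partition.ext
    ext a
    by_cases ha : 1 ≤ a ∧ a ≤ N
    · have := congrFun h ⟨a - 1, by omega⟩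
      simpa [mult, Nat.sub_add_cancel ha.1] using this
    · rw [Multiset.count_eq_zero_of_notMem, Multiset.count_eq_zero_of_notMem]
      · exact fun hm => ha ⟨p'.parts_pos hm, p'.le_of_mem_parts hm⟩
      · exact fun hm => ha ⟨p.parts_pos hm, p.le_of_mem_parts hm⟩
  have hwt : ∀ p : Nat.Partition N, ∑ i : Fin N, mult p i * (i.val + 1) = N := by
    intro p
    have h1 := Finset.sum_multiset_count_of_subset p.parts
      ((Finset.range N).image (· + 1)) (fun a ha => by
        rw [Multiset.mem_toFinset] at ha
        have h2 := p.parts_pos ha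
        have h3 := p.le_of_mem_parts ha
        exact Finset.mem_image.mpr ⟨a - 1, Finset.mem_range.mpr (by omega), by omega⟩)
    rw [p.parts_sum, Finset.sum_image (fun a _ b _ h => by simpa using h)] at h1
    rw [Fin.sum_univ_eq_sum_range (fun i => p.parts.count (i + 1) * (i + 1))]
    simpa using h1.symm
  let P : Finset (Fin N → ℕ) := Fintype.piFinset fun _ => Finset.range (N + 1)
  have hP : ∀ p, mult p ∈ P := fun p => by
    rw [Fintype.mem_piFinset]
    intro i
    rw [Finset.mem_range]
    have h1 := Finset.single_le_sum (f := fun i : Fin N => mult p i * (i.val + 1))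
      (fun _ _ => Nat.zero_le _) (Finset.mem_univ i)
    rw [hwt] at h1
    have h2 : mult p i * 1 ≤ mult p i * (i.val + 1) := Nat.mul_le_mul_left _ (by omega)
    omega
  let x : Fin N → ℝ := fun i => Real.exp (-(((i.val : ℝ) + 1) / s))
  have hx0 : ∀ i, 0 < x i := fun i => Real.exp_pos _
  have hx1 : ∀ i, x i < 1 := fun i => by
    have : 0 < ((i.val : ℝ) + 1) / s := by positivity
    exact Real.exp_lt_one_iff.mpr (by linarith)
  have hterm : ∀ p, ∏ i, x i ^ mult p i = Real.exp (-s) := by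
    intro p
    have h1 : ∀ i, x i ^ mult p i = Real.exp (-((mult p i * (i.val + 1) : ℕ) : ℝ) / s) := by
      intro i
      rw [← Real.exp_nat_mul]; congr 1; push_cast; ring
    simp only [h1]
    rw [← Real.exp_sum, ← Finset.sum_div, Finset.sum_neg_distrib, ← Nat.cast_sum, hwt, ← hss]
    congr 1; field_simp
  have h1 : (Fintype.card (Nat.Partition N) : ℝ) * Real.exp (-s) ≤ Real.exp (Z * s) := by
    calc (Fintype.card (Nat.Partition N) : ℝ) * Real.exp (-s)
        = ∑ p : Nat.Partition N, ∏ i, x i ^ mult p i := by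
          simp only [hterm]; rw [Finset.sum_const, Finset.card_univ, nsmul_eq_mul]
      _ = ∑ m ∈ Finset.univ.image mult, ∏ i, x i ^ m i :=
          by rw [Finset.sum_image (fun a _ b _ h => hinj h)]
      _ ≤ ∑ m ∈ P, ∏ i, x i ^ m i := by
          refine Finset.sum_le_sum_of_subset_of_nonneg ?_ fun m _ _ =>
            Finset.prod_nonneg fun i _ => pow_nonneg (hx0 i).le _
          intro m hm
          obtain ⟨p, _, rfl⟩ := Finset.mem_image.mp hm
          exact hP p
      _ = ∏ i, ∑ m ∈ Finset.range (N + 1), x i ^ m :=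
          (Finset.prod_univ_sum (fun _ => Finset.range (N + 1)) (fun i m => x i ^ m)).symm
      _ ≤ ∏ i, Real.exp (-Real.log (1 - x i)) := by
          refine Finset.prod_le_prod (fun i _ => Finset.sum_nonneg fun m _ =>
            pow_nonneg (hx0 i).le _) fun i _ => ?_
          rw [Real.exp_neg, Real.exp_log (by linarith [hx1 i]),
            ← tsum_geometric_of_lt_one (hx0 i).le (hx1 i)]
          exact (summable_geometric_of_lt_one (hx0 i).le (hx1 i)).sum_le_tsum _
            fun m _ => pow_nonneg (hx0 i).le _
      _ = Real.exp (∑ i : Fin N, -Real.log (1 - x i)) := (Real.exp_sum _ _).symm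
      _ ≤ Real.exp (Z * s) := by
          rw [Real.exp_le_exp, Fin.sum_univ_eq_sum_range
            (fun i => -Real.log (1 - Real.exp (-(((i : ℝ) + 1) / s))))]
          exact log_prod_le hs0 N
  rw [Real.exp_neg, mul_inv_le_iff₀ (Real.exp_pos _), ← Real.exp_add] at h1
  have h2 : (1 + Z) * s = Z * s + s := by ring
  rwa [h2]

/-- Irreducibles are at most as many as conjugacy classes, which are counted by cycle types, that
is by partitions of `N`. -/
lemma card_irreps_le {N : ℕ} (hN : 1 ≤ N) {I : Type} [Fintype I]
    {U : I → FDRep ℂ (Perm (Fin N))} (hs : ∀ i, Simple (U i))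
    (hinj : ∀ i j, Nonempty (U i ≅ U j) → i = j) :
    (Fintype.card I : ℝ) ≤ Real.exp ((1 + Z) * Real.sqrt N) := by
  let F : ConjClasses (Perm (Fin N)) → Nat.Partition (Fintype.card (Fin N)) :=
    Quotient.lift Perm.partition fun _ _ h => Perm.partition_eq_of_isConj.mp h
  have hF : Function.Injective F := by
    intro a b
    induction a using Quotient.inductionOn with | _ a => ?_
    induction b using Quotient.inductionOn with | _ b => ?_
    exact fun h => Quotient.sound (Perm.partition_eq_of_isConj.mpr h)
  have h1 := Nat.card_le_card_of_injective F hF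
  rw [Nat.card_eq_fintype_card (α := Nat.Partition _), Fintype.card_fin] at h1
  have h2 := card_le_conjClasses hs hinj
  refine le_trans ?_ (card_partition_le hN)
  exact_mod_cast h2.trans h1

/-! ### The two-sided bound on dimensions -/

/-- Translation of the logarithmic normalisation: `d² ≥ e^{-c√N} N!` on one side of the
threshold `c`, `d² ≤ e^{-c√N} N!` on the other. -/
lemma log_threshold {d F s c : ℝ} (hd : 0 < d) (hF : 0 < F) (hs : 0 < s) :
    (-(2 / s) * Real.log (d / Real.sqrt F) ≤ c → Real.exp (-(c * s)) * F ≤ d ^ 2) ∧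
    (c ≤ -(2 / s) * Real.log (d / Real.sqrt F) → d ^ 2 ≤ Real.exp (-(c * s)) * F) := by
  have hq : 0 < Real.sqrt F := Real.sqrt_pos.mpr hF
  have hd2 : d ^ 2 = Real.exp (2 * Real.log (d / Real.sqrt F)) * F := by
    have h1 : Real.exp (2 * Real.log (d / Real.sqrt F)) = (d / Real.sqrt F) ^ 2 := by
      rw [two_mul, Real.exp_add, Real.exp_log (by positivity), sq]
    rw [h1, div_pow, Real.sq_sqrt hF.le, div_mul_cancel₀ _ hF.ne']
  have h2 : -(2 / s) * Real.log (d / Real.sqrt F)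
      = -(2 * Real.log (d / Real.sqrt F)) / s := by ring
  rw [h2, hd2, div_le_iff₀ hs, le_div_iff₀ hs]
  constructor
  · intro h
    gcongr
    linarith
  · intro h
    gcongr
    linarith

/-- The quantitative form of the theorem with `c₀ = 1/240` and `c₁ = 2 + ζ(2)`. The exceptional mass
`289 / √N` is `288 / √N` from the representations of too large dimension and `1 / √N` from those of
too small dimension. -/
lemma main_bound {N : ℕ} (hN : 720 ≤ Real.sqrt N) {I : Type} [Fintype I]
    {U : I → FDRep ℂ (Perm (Fin N))} (hs : ∀ i, Simple (U i))
    (hinj : ∀ i j, Nonempty (U i ≅ U j) → i = j)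
    (hcomp : ∀ X : FDRep ℂ (Perm (Fin N)), Simple X → ∃ i, Nonempty (X ≅ U i)) :
    (1 - 289 / Real.sqrt N) * (N.factorial : ℝ) ≤
      ∑ i ∈ Finset.univ.filter (fun i : I =>
          1 / 240 < -(2 / Real.sqrt N) *
              Real.log ((Module.finrank ℂ (U i) : ℝ) / Real.sqrt (N.factorial)) ∧
          -(2 / Real.sqrt N) *
              Real.log ((Module.finrank ℂ (U i) : ℝ) / Real.sqrt (N.factorial)) < 2 + Z),
        ((Module.finrank ℂ (U i) : ℝ)) ^ 2 := by
  have hs0 : 0 < Real.sqrt N := by linarith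
  have hN1 : 1 ≤ N := by
    rcases Nat.eq_zero_or_pos N with h | h
    · rw [h, Nat.cast_zero, Real.sqrt_zero] at hN; linarith
    · exact h
  have hF : (0 : ℝ) < N.factorial := by exact_mod_cast N.factorial_pos
  obtain ⟨k, hk⟩ : ∃ k, k = ⌊Real.sqrt N / 120⌋₊ := ⟨_, rfl⟩
  have hk2 : Real.sqrt N / 120 < k + 1 := by rw [hk]; exact Nat.lt_floor_add_one _
  obtain ⟨T, hT, hTc⟩ := goodT_card (n := N - k) hN1
  have hk0 : (0 : ℝ) < k := by linarith
  have hkpos : 0 < k := by exact_mod_cast hk0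
  have hkN : k < N := (bound_small hN hk (t := 0) (by rw [Nat.cast_zero]; positivity)).1
  have hsub : N - (N - k) = k := by omega
  rw [hsub] at hTc
  obtain ⟨-, hB⟩ := bound_small hN hk hTc
  have hlarge := large_mass (by omega : N - k < N) hs hinj hcomp T hT
  rw [hsub] at hlarge
  set s := Real.sqrt N with hsdef
  set L := ∑ i ∈ Finset.univ.filter (fun i =>
        4 * ((N - k).factorial * (T.card * k.factorial)) < Module.finrank ℂ (U i) ^ 2),
      (Module.finrank ℂ (U i) : ℝ) ^ 2 with hL
  have hL' : L ≤ 288 / s * N.factorial := by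
    -- `k ≥ s / 120 - 1 ≥ s / 144`, by `s ≥ 720`
    have h1 : s / 144 ≤ k := by linarith
    have h2 : L * (s / 144) ≤ 2 * N.factorial := by
      refine le_trans (mul_le_mul_of_nonneg_left h1 ?_) hlarge
      exact Finset.sum_nonneg fun _ _ => by positivity
    rw [div_mul_eq_mul_div, le_div_iff₀ hs0]
    linarith
  have htot : ∑ i, (Module.finrank ℂ (U i) : ℝ) ^ 2 = N.factorial := by
    have := plancherel_total hs hinj hcomp
    rw [Nat.card_eq_fintype_card, Fintype.card_perm, Fintype.card_fin] at this
    exact_mod_cast this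
  -- each representation is in the window, or of large dimension, or of small dimension
  have hpt : ∀ i, (Module.finrank ℂ (U i) : ℝ) ^ 2 ≤
      (if 1 / 240 < -(2 / s) *
              Real.log ((Module.finrank ℂ (U i) : ℝ) / Real.sqrt (N.factorial)) ∧
          -(2 / s) *
              Real.log ((Module.finrank ℂ (U i) : ℝ) / Real.sqrt (N.factorial)) < 2 + Z
        then (Module.finrank ℂ (U i) : ℝ) ^ 2 else 0)
      + (if 4 * ((N - k).factorial * (T.card * k.factorial)) < Module.finrank ℂ (U i) ^ 2
        then (Module.finrank ℂ (U i) : ℝ) ^ 2 else 0)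
      + Real.exp (-((2 + Z) * s)) * N.factorial := by
    intro i
    set d := Module.finrank ℂ (U i) with hd
    have h0 : 0 ≤ Real.exp (-((2 + Z) * s)) * N.factorial := by positivity
    rcases Nat.eq_zero_or_pos d with hd0 | hdpos
    · rw [hd0]
      simpa using h0
    have hdpos' : (0 : ℝ) < d := by exact_mod_cast hdpos
    have hd2 : (0 : ℝ) ≤ (d : ℝ) ^ 2 := by positivity
    by_cases h1 : 1 / 240 < -(2 / s) * Real.log ((d : ℝ) / Real.sqrt (N.factorial))
    · by_cases h2 : -(2 / s) * Real.log ((d : ℝ) / Real.sqrt (N.factorial)) < 2 + Z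
      · rw [if_pos ⟨h1, h2⟩]
        split_ifs <;> linarith
      · have h3 := (log_threshold hdpos' hF hs0).2 (not_lt.mp h2)
        split_ifs <;> linarith
    · have h3 := (log_threshold hdpos' hF hs0).1 (not_lt.mp h1)
      have h4 : 4 * ((N - k).factorial * (T.card * k.factorial)) < d ^ 2 := by
        have h5 : Real.exp (-(1 / 240 * s)) = Real.exp (-(s / 240)) := by congr 1; ring
        rw [h5] at h3
        exact_mod_cast hB.trans_le h3
      rw [if_pos h4]
      split_ifs <;> linarith
  have hsum := Finset.sum_le_sum fun i (_ : i ∈ Finset.univ) => hpt i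
  rw [htot, Finset.sum_add_distrib, Finset.sum_add_distrib, ← Finset.sum_filter,
    ← Finset.sum_filter, ← hL, Finset.sum_const, Finset.card_univ, nsmul_eq_mul] at hsum
  have hsmall : (Fintype.card I : ℝ) * (Real.exp (-((2 + Z) * s)) * N.factorial)
      ≤ 1 / s * N.factorial := by
    have h1 := card_irreps_le hN1 hs hinj
    rw [← hsdef] at h1
    have h2 : Real.exp ((1 + Z) * s) * Real.exp (-((2 + Z) * s)) = (Real.exp s)⁻¹ := by
      rw [← Real.exp_add, ← Real.exp_neg]; congr 1; ring
    have h3 : (Real.exp s)⁻¹ ≤ 1 / s := by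
      rw [one_div]
      exact inv_anti₀ hs0 (by linarith [Real.add_one_le_exp s])
    calc _ = (Fintype.card I : ℝ) * Real.exp (-((2 + Z) * s)) * N.factorial := by ring
      _ ≤ Real.exp ((1 + Z) * s) * Real.exp (-((2 + Z) * s)) * N.factorial := by gcongr
      _ ≤ _ := by rw [h2]; gcongr
  have hfin : (1 - 289 / s) * (N.factorial : ℝ)
      = N.factorial - 288 / s * N.factorial - 1 / s * N.factorial := by ring
  rw [hfin]
  linarith

end KerovPlancherel

/-- Kerov: there exist constants `0 < c₀ < c₁` such that the Plancherel measure of the set of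
irreducible representations `r` of `S_N` with
`c₀ < -(2/√N) log(d_r/√(N!)) < c₁` tends to `1` as `N → ∞`. -/
theorem stmt7 :
    ∃ c₀ c₁ : ℝ, 0 < c₀ ∧ 0 < c₁ ∧ c₀ < c₁ ∧
      ∀ ε : ℝ, 0 < ε → ∃ N₀ : ℕ, ∀ N : ℕ, N₀ ≤ N →
        ∀ (I : Type) [Fintype I] (U : I → FDRep ℂ (Equiv.Perm (Fin N))),
          (∀ i, Simple (U i)) →
          (∀ i j : I, Nonempty (U i ≅ U j) → i = j) →
          (∀ X : FDRep ℂ (Equiv.Perm (Fin N)), Simple X → ∃ i : I, Nonempty (X ≅ U i)) →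
          (1 - ε) * (N.factorial : ℝ) ≤
            ∑ i ∈ Finset.univ.filter (fun i : I =>
                c₀ < -(2 / Real.sqrt N) *
                    Real.log ((Module.finrank ℂ (U i) : ℝ) / Real.sqrt (N.factorial)) ∧
                -(2 / Real.sqrt N) *
                    Real.log ((Module.finrank ℂ (U i) : ℝ) / Real.sqrt (N.factorial)) < c₁),
              ((Module.finrank ℂ (U i) : ℝ)) ^ 2 := by
  have hZ := KerovPlancherel.Z_nonneg
  refine ⟨1 / 240, 2 + KerovPlancherel.Z, by norm_num, by linarith, by linarith, ?_⟩
  intro ε hε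
  -- `√N ≥ 720` is needed by `main_bound`, and `√N ≥ 289 / ε` makes its error at most `ε`
  refine ⟨⌈(max 720 (289 / ε)) ^ 2⌉₊, fun N hN I _ U hs hinj hcomp => ?_⟩
  have h1 : max 720 (289 / ε) ≤ Real.sqrt N :=
    Real.le_sqrt_of_sq_le (Nat.ceil_le.mp hN)
  have h2 : 720 ≤ Real.sqrt N := (le_max_left _ _).trans h1
  have h3 : 289 / ε ≤ Real.sqrt N := (le_max_right _ _).trans h1
  have h4 : 289 / Real.sqrt N ≤ ε := by
    rw [div_le_iff₀ hε] at h3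
    rw [div_le_iff₀ (by linarith)]
    linarith
  refine le_trans ?_ (KerovPlancherel.main_bound h2 hs hinj hcomp)
  gcongr
end
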